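/- arXiv:1712.08678 — 4 statements merged into one kernel-verified Lean document; each statement's English description precedes it below -/
import Mathlib

section
/- For the ferromagnetic Ising–Kac model (pair potential k_γ ≥ 0), for every β > 0, every external field b ≥ 0, and all sites x, y ∈ Λ_N, the spin covariance is decreased by the external field: E^γ_{β,b}[σ_x σ_y] − E^γ_{β,b}[σ_x] E^γ_{β,b}[σ_y] ≤ E^γ_{β,0}[σ_x σ_y] − E^γ_{β,0}[σ_x] E^γ_{β,0}[σ_y]. -/
open scoped BigOperators ENNReal
open MeasureTheory

noncomputable section

namespace IsingKac

/-- The periodic lattice `Λ_N = {1-N, …, N}²`, realised as `(ℤ/2Nℤ)²`. -/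
abbrev Lat (N : ℕ) : Type := ZMod (2*N) × ZMod (2*N)

instance latNeZero (N : ℕ) [NeZero N] : NeZero (2*N) := ⟨by have := NeZero.ne N; omega⟩

/-- The representative of `v ∈ ℤ/2Nℤ` lying in `{1-N, …, N}`. -/
def latRep (N : ℕ) (v : ZMod (2*N)) : ℤ :=
  if (v.val : ℤ) ≤ (N : ℤ) then (v.val : ℤ) else (v.val : ℤ) - 2*N

def latRep2 (N : ℕ) (z : Lat N) : ℤ × ℤ := (latRep N z.1, latRep N z.2)

/-- The character `e_w(x) = exp(iπ w·x)`. -/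
def eW (w : ℤ × ℤ) (x : ℝ × ℝ) : ℂ :=
  Complex.exp ((Real.pi : ℂ) * Complex.I * ((w.1 : ℂ) * (x.1 : ℂ) + (w.2 : ℂ) * (x.2 : ℂ)))

/-- The point `ε z ∈ Λ_ε ⊂ 𝕋²` corresponding to `z ∈ Λ_N` (with `ε = 1/N`). -/
def latPt (N : ℕ) (z : Lat N) : ℝ × ℝ :=
  ((latRep N z.1 : ℝ) / N, (latRep N z.2 : ℝ) / N)

/-- Discrete Fourier coefficient `f̂(w) = Σ_{x ∈ Λ_ε} ε² f(x) e^{-iπ w·x}`. -/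
def dFT (N : ℕ) [NeZero N] (f : Lat N → ℂ) (w : ℤ × ℤ) : ℂ :=
  ∑ z : Lat N, ((N : ℂ)^2)⁻¹ * f z * (starRingEnd ℂ) (eW w (latPt N z))

/-- The extension operator `(Ex f)(x) = (1/4) Σ_{w ∈ Λ_N} f̂(w) e^{iπ w·x}` for `x ∈ 𝕋²`. -/
def Ex (N : ℕ) [NeZero N] (f : Lat N → ℂ) (x : ℝ × ℝ) : ℂ :=
  (1/4 : ℂ) * ∑ z : Lat N, dFT N f (latRep2 N z) * eW (latRep2 N z) x

/-- Discrete `L^p` norm on `Λ_ε`, `p ∈ [1,∞]`. -/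
def dLp (N : ℕ) [NeZero N] (p : ℝ≥0∞) {E : Type*} [NormedAddCommGroup E]
    (f : Lat N → E) : ℝ :=
  if p = ∞ then ⨆ z : Lat N, ‖f z‖
  else (∑ z : Lat N, ((N : ℝ)^2)⁻¹ * ‖f z‖ ^ p.toReal) ^ (1/p.toReal)

/-- Fundamental domain of the torus `𝕋² = [-1,1]²`. -/
def box : Set (ℝ × ℝ) := Set.Icc (-1 : ℝ) 1 ×ˢ Set.Icc (-1 : ℝ) 1

/-- `L^p(𝕋²)` norm, `p ∈ [1,∞]`. -/
def cLp (p : ℝ≥0∞) {E : Type*} [NormedAddCommGroup E] (g : ℝ × ℝ → E) : ℝ≥0∞ :=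
  eLpNorm g p (volume.restrict box)

/-- Euclidean norm on `ℝ²`. -/
def enorm2 (r : ℝ × ℝ) : ℝ := Real.sqrt (r.1^2 + r.2^2)

/-- A Littlewood–Paley partition of unity `(χ̃, χ)` on `ℝ²`. -/
structure LPpartition : Type where
  chit : ℝ × ℝ → ℝ
  chi : ℝ × ℝ → ℝ
  cont_t : Continuous chit
  cont : Continuous chi
  mem_t : ∀ r, chit r ∈ Set.Icc (0:ℝ) 1
  mem : ∀ r, chi r ∈ Set.Icc (0:ℝ) 1
  supp_t : ∀ r : ℝ × ℝ, 4/3 < enorm2 r → chit r = 0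
  supp : ∀ r : ℝ × ℝ, enorm2 r < 3/4 ∨ 8/3 < enorm2 r → chi r = 0
  partition : ∀ r : ℝ × ℝ, chit r + ∑' k : ℕ, chi ((2:ℝ)^(-(k:ℤ)) • r) = 1

/-- `χ_k`, for `k ≥ -1`. -/
def LPchi (P : LPpartition) (k : ℤ) : ℝ × ℝ → ℝ :=
  if k = -1 then P.chit else fun r => P.chi ((2:ℝ)^(-k) • r)

/-- The Littlewood–Paley block `δ_k (Ex f)` of (the extension of) a lattice function. -/
def dBlock (N : ℕ) [NeZero N] (P : LPpartition) (k : ℤ) (f : Lat N → ℂ) (x : ℝ × ℝ) : ℂ :=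
  (1/4 : ℂ) * ∑ z : Lat N,
    ((LPchi P k ((latRep N z.1 : ℝ), (latRep N z.2 : ℝ)) : ℝ) : ℂ) *
      dFT N f (latRep2 N z) * eW (latRep2 N z) x

/-- Discrete Besov norm `‖f‖_{B^ν_{p,q}(Λ_ε)}`. -/
def dBesov (N : ℕ) [NeZero N] (P : LPpartition) (ν : ℝ) (p q : ℝ≥0∞) (f : Lat N → ℂ) : ℝ :=
  if q = ∞ then
    ⨆ k : ℕ, (2:ℝ)^(ν * ((k:ℝ) - 1)) * dLp N p (fun z => dBlock N P ((k:ℤ)-1) f (latPt N z))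
  else
    (∑' k : ℕ, ((2:ℝ)^(ν * ((k:ℝ) - 1)) *
      dLp N p (fun z => dBlock N P ((k:ℤ)-1) f (latPt N z))) ^ q.toReal) ^ (1/q.toReal)

/-- The `C^{-ν}` (Besov–Hölder) norm of the extension `Ex f`:
`sup_{k ≥ -1} 2^{-νk} ‖δ_k (Ex f)‖_{L^∞(𝕋²)}`. -/
def holderNeg (N : ℕ) [NeZero N] (P : LPpartition) (ν : ℝ) (f : Lat N → ℂ) : ℝ :=
  ⨆ k : ℕ, (2:ℝ)^(-ν * ((k:ℝ) - 1)) * ⨆ x : ℝ × ℝ, ‖dBlock N P ((k:ℤ)-1) f x‖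

/-- Spin values. -/
def spin (s : Bool) : ℝ := if s then 1 else -1

/-- Hamiltonian `H(σ) = (β/2) Σ_{x,y} k(x-y) σ_x σ_y + b Σ_x σ_x`. -/
def hamil (N : ℕ) [NeZero N] (kk : Lat N → ℝ) (β b : ℝ) (σ : Lat N → ℝ) : ℝ :=
  β/2 * ∑ x : Lat N, ∑ y : Lat N, kk (x - y) * σ x * σ y + b * ∑ x : Lat N, σ x

/-- Gibbs expectation `E^γ_{β,b}[F]`. -/
def gibbsE (N : ℕ) [NeZero N] (kk : Lat N → ℝ) (β b : ℝ) (F : (Lat N → ℝ) → ℝ) : ℝ :=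
  (∑ s : Lat N → Bool, Real.exp (hamil N kk β b (fun x => spin (s x))) * F (fun x => spin (s x))) /
  (∑ s : Lat N → Bool, Real.exp (hamil N kk β b (fun x => spin (s x))))

/-- The profile `𝔎 : ℝ² → [0,1]`, twice differentiable, radial, supported in `B(0,3)`,
not identically zero. -/
structure KacProfile : Type where
  f : ℝ × ℝ → ℝ
  smooth : ContDiff ℝ 2 f
  mem : ∀ x, f x ∈ Set.Icc (0:ℝ) 1
  radial : ∀ x y : ℝ × ℝ, enorm2 x = enorm2 y → f x = f y
  supp : ∀ x : ℝ × ℝ, 3 < enorm2 x → f x = 0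
  nontriv : ∃ x, f x ≠ 0

/-- The Kac kernel `k_γ(z) = c γ² 𝔎(γ·z)` (shortest periodic representative), `k_γ(0)=0`. -/
def kGamma (𝔎 : KacProfile) (N : ℕ) (c γ : ℝ) (z : Lat N) : ℝ :=
  if z = 0 then 0 else c * γ^2 * 𝔎.f (γ * (latRep N z.1 : ℝ), γ * (latRep N z.2 : ℝ))

/-- `γ = N^{-1/2}`, so that `γ² = ε = 1/N`. -/
def gam (N : ℕ) : ℝ := Real.sqrt ((N : ℝ)⁻¹)

/-- Fourier transform `K̂_γ(ω) = Σ_z k_γ(z) e^{-iπ ω·(εz)}` of the macroscopic kernel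
(real, since the kernel is even). -/
def kHat (N : ℕ) [NeZero N] (kk : Lat N → ℝ) (ω : ℤ × ℤ) : ℝ :=
  ∑ z : Lat N, kk z *
    Real.cos (Real.pi * ((ω.1 : ℝ) * (latRep N z.1 : ℝ) / N + (ω.2 : ℝ) * (latRep N z.2 : ℝ) / N))

/-- The renormalisation constant
`𝔠_γ = (1/4) Σ_{ω ∈ Λ_N \ {0}} |K̂_γ(ω)|² / (γ^{-2} (1-K̂_γ(ω)))`. -/
def cGamma (N : ℕ) [NeZero N] (kk : Lat N → ℝ) (γ : ℝ) : ℝ :=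
  (1/4) * ∑ z : Lat N, if z = (0 : Lat N) then 0 else
    (kHat N kk (latRep2 N z))^2 / ((γ^2)⁻¹ * (1 - kHat N kk (latRep2 N z)))

/-- Critical inverse temperature `β = 1 + γ²(𝔠_γ + A)`. -/
def betaCrit (𝔎 : KacProfile) (N : ℕ) [NeZero N] (c A : ℝ) : ℝ :=
  1 + (gam N)^2 * (cGamma N (kGamma 𝔎 N c (gam N)) (gam N) + A)

/-- The fluctuation field `X_γ(x) = γ^{-1} Σ_z k_γ(ε^{-1}x - z) σ_z`, as a function on `Λ_N`. -/
def fluct (N : ℕ) [NeZero N] (kk : Lat N → ℝ) (γ : ℝ) (σ : Lat N → ℝ) (z : Lat N) : ℝ :=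
  γ⁻¹ * ∑ y : Lat N, kk (z - y) * σ y

/-- The rescaled step field `γ^{-1} σ_{⌊ε^{-1}x⌋}` on the torus (without the `γ^{-1}`). -/
def stepField (N : ℕ) (σ : Lat N → ℝ) (x : ℝ × ℝ) : ℝ :=
  σ (((⌊(N : ℝ) * x.1⌋ : ℤ) : ZMod (2*N)), ((⌊(N : ℝ) * x.2⌋ : ℤ) : ZMod (2*N)))

/-- Fourier coefficient on the torus: `ĝ(ω) = ∫_{𝕋²} g(x) e^{-iπω·x} dx`. -/
def cFT (g : ℝ × ℝ → ℂ) (ω : ℤ × ℤ) : ℂ :=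
  ∫ x in box, g x * (starRingEnd ℂ) (eW ω x)


/-! ### Additional definitions -/

/-- Nearest-neighbour Dirichlet sum `Σ_{x,y ∈ Λ_ε, |x-y|=ε} ε² (f(y)-f(x))²`. -/
def nnSum (N : ℕ) [NeZero N] (f : Lat N → ℝ) : ℝ :=
  ∑ x : Lat N, ((N : ℝ)^2)⁻¹ *
    ((f (x + (1, 0)) - f x)^2 + (f (x + (0, 1)) - f x)^2 +
     (f (x - (1, 0)) - f x)^2 + (f (x - (0, 1)) - f x)^2)

/-- The `d`-dimensional periodic lattice `Λ_N^d`. -/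
abbrev LatD (d N : ℕ) : Type := Fin d → ZMod (2*N)

/-- Discrete `L^p` norm on `Λ_ε^d`, `p ∈ [1,∞]`. -/
def dLpD (d N : ℕ) [NeZero N] (p : ℝ≥0∞) (f : LatD d N → ℂ) : ℝ :=
  if p = ∞ then ⨆ z : LatD d N, ‖f z‖
  else (∑ z : LatD d N, ((N : ℝ)^d)⁻¹ * ‖f z‖ ^ p.toReal) ^ (1/p.toReal)

/-- `Σ_{w ∈ Λ_N^d} χ(λ w) e_w`, evaluated at the lattice point `ε z ∈ Λ_ε^d`. -/
def gLam (d N : ℕ) [NeZero N] (χ : (Fin d → ℝ) → ℝ) (lam : ℝ) (z : LatD d N) : ℂ :=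
  ∑ w : LatD d N, ((χ (fun i => lam * (latRep N (w i) : ℝ)) : ℝ) : ℂ) *
    Complex.exp ((Real.pi : ℂ) * Complex.I *
      ((∑ i : Fin d, (latRep N (w i) : ℝ) * ((latRep N (z i) : ℝ) / N) : ℝ) : ℂ))

/-- Second partial derivative of `φ` in directions `v, w`. -/
def pd2 (φ : ℝ × ℝ → ℝ) (v w : ℝ × ℝ) : ℝ × ℝ → ℝ :=
  fun x => fderiv ℝ (fun y => fderiv ℝ φ y v) x w

/-- `max_{i,j ∈ {1,2}} ‖∂_i ∂_j φ‖_{L^∞}`. -/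
def secondDerivBound (φ : ℝ × ℝ → ℝ) : ℝ :=
  max (max (⨆ x : ℝ × ℝ, |pd2 φ (1,0) (1,0) x|) (⨆ x : ℝ × ℝ, |pd2 φ (1,0) (0,1) x|))
      (max (⨆ x : ℝ × ℝ, |pd2 φ (0,1) (1,0) x|) (⨆ x : ℝ × ℝ, |pd2 φ (0,1) (0,1) x|))

/-- The Littlewood–Paley block `δ_k g` of a function on the torus. -/
def cBlock (P : LPpartition) (k : ℤ) (g : ℝ × ℝ → ℂ) (x : ℝ × ℝ) : ℂ :=
  (1/4 : ℂ) * ∑' ω : ℤ × ℤ, ((LPchi P k ((ω.1 : ℝ), (ω.2 : ℝ)) : ℝ) : ℂ) * cFT g ω * eW ω x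

/-- Besov norm `‖g‖_{B^ν_{1,1}(𝕋²)} = Σ_{k ≥ -1} 2^{νk} ‖δ_k g‖_{L¹(𝕋²)}`. -/
def cBesov11 (P : LPpartition) (ν : ℝ) (g : ℝ × ℝ → ℂ) : ℝ :=
  ∑' k : ℕ, (2:ℝ) ^ (ν * ((k:ℝ) - 1)) * ∫ x in box, ‖cBlock P ((k:ℤ)-1) g x‖

open scoped NNReal

/-! ### Ellis–Monroe four-copy argument -/

/-- Four copies of a spin. -/
abbrev S4 : Type := Bool × Bool × Bool × Bool

/-- The orthogonally rotated variables of four copies. -/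
def rot (i : Fin 4) (v : S4) : ℝ :=
  match i with
  | 0 => (spin v.1 + spin v.2.1 + spin v.2.2.1 + spin v.2.2.2) / 2
  | 1 => (spin v.1 + spin v.2.1 - spin v.2.2.1 - spin v.2.2.2) / 2
  | 2 => (spin v.1 - spin v.2.1 + spin v.2.2.1 - spin v.2.2.2) / 2
  | 3 => (-spin v.1 + spin v.2.1 + spin v.2.2.1 - spin v.2.2.2) / 2

lemma ellis_monroe (e : Fin 4 → ℕ) : 0 ≤ ∑ v : S4, ∏ i, rot i v ^ e i := by
  simp only [Fin.prod_univ_four, Fintype.sum_prod_type, Fintype.sum_bool, rot, spin]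
  generalize e 0 = k
  generalize e 1 = l
  generalize e 2 = m
  generalize e 3 = n
  norm_num
  have h1 : (0:ℝ) ≤ 2 ^ k * 0 ^ l * 0 ^ m * 0 ^ n := by positivity
  have h2 : (0:ℝ) ≤ 0 ^ k * 2 ^ l * 0 ^ m * 0 ^ n := by positivity
  have h3 : (0:ℝ) ≤ 0 ^ k * 0 ^ l * 2 ^ m * 0 ^ n := by positivity
  have h4 : (0:ℝ) ≤ 0 ^ k * 0 ^ l * 0 ^ m * 2 ^ n := by positivity
  rcases Nat.even_or_odd k with hk | hk <;> rcases Nat.even_or_odd l with hl | hl <;>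
  rcases Nat.even_or_odd m with hm | hm <;> rcases Nat.even_or_odd n with hn | hn <;>
  simp only [hk.neg_pow, hl.neg_pow, hm.neg_pow, hn.neg_pow, one_pow] <;>
  linarith

section cone
variable {L : Type} [Fintype L] [DecidableEq L]

/-- Monomials in the rotated variables. -/
def mono4 (e : L → Fin 4 → ℕ) (s : L → S4) : ℝ := ∏ x, ∏ i, rot i (s x) ^ e x i

lemma mono4_add (e f : L → Fin 4 → ℕ) (s : L → S4) :
    mono4 (e + f) s = mono4 e s * mono4 f s := by
  simp only [mono4, Pi.add_apply, pow_add, Finset.prod_mul_distrib]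

lemma mono4_single (x : L) (i : Fin 4) (s : L → S4) :
    mono4 (Pi.single x (Pi.single i 1)) s = rot i (s x) := by
  unfold mono4
  rw [Finset.prod_eq_single x, Finset.prod_eq_single i]
  · simp
  · intro j _ hj; simp [hj]
  · simp
  · intro y _ hy; simp [hy]
  · simp

lemma mono4_sum (e : L → Fin 4 → ℕ) : 0 ≤ ∑ s : L → S4, mono4 e s := by
  have : ∑ s : L → S4, mono4 e s = ∏ x, ∑ v : S4, ∏ i, rot i v ^ e x i := by
    rw [Finset.prod_univ_sum, Fintype.piFinset_univ]; rfl
  rw [this]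
  exact Finset.prod_nonneg fun x _ => ellis_monroe _

/-- Functions with nonnegative sum against every monomial. -/
def KC (F : (L → S4) → ℝ) : Prop := ∀ e, 0 ≤ ∑ s, F s * mono4 e s

/-- Multipliers of `KC`. -/
def QC (G : (L → S4) → ℝ) : Prop := ∀ F, KC F → KC (fun s => F s * G s)

lemma KC_one : KC (fun _ : L → S4 => 1) := fun e => by simpa using mono4_sum e

lemma QC_rot (x : L) (i : Fin 4) : QC (fun s : L → S4 => rot i (s x)) := fun F hF e => by
  refine (hF (Pi.single x (Pi.single i 1) + e)).trans_eq (Finset.sum_congr rfl fun s _ => ?_)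
  rw [mono4_add, mono4_single, mul_assoc]

lemma QC_add {G H : (L → S4) → ℝ} (hG : QC G) (hH : QC H) : QC (fun s => G s + H s) :=
  fun F hF e => by
    refine (add_nonneg (hG F hF e) (hH F hF e)).trans_eq ?_
    rw [← Finset.sum_add_distrib]
    exact Finset.sum_congr rfl fun s _ => by ring

lemma QC_mul {G H : (L → S4) → ℝ} (hG : QC G) (hH : QC H) : QC (fun s => G s * H s) :=
  fun F hF e => by
    refine (hH _ (hG F hF) e).trans_eq (Finset.sum_congr rfl fun s _ => by ring)

lemma QC_const {c : ℝ} (hc : 0 ≤ c) : QC (fun _ : L → S4 => c) :=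
  fun F hF e => by
    refine (mul_nonneg hc (hF e)).trans_eq ?_
    rw [Finset.mul_sum]
    exact Finset.sum_congr rfl fun s _ => by ring

lemma QC_sum {ι : Type} (T : Finset ι) (G : ι → (L → S4) → ℝ) (h : ∀ i, QC (G i)) :
    QC (fun s => ∑ i ∈ T, G i s) := by
  classical
  induction T using Finset.induction_on with
  | empty => simpa using QC_const (L := L) le_rfl
  | insert a T ha ih => simpa only [Finset.sum_insert ha] using QC_add (h a) ih

lemma QC_pow {G : (L → S4) → ℝ} (hG : QC G) (n : ℕ) : QC (fun s => G s ^ n) := by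
  induction n with
  | zero => simpa using QC_const (L := L) zero_le_one
  | succ n ih => simpa only [pow_succ] using QC_mul ih hG

lemma QC_exp {G : (L → S4) → ℝ} (hG : QC G) : QC (fun s => Real.exp (G s)) :=
  fun F hF e => by
    have key : HasSum (fun n : ℕ => ∑ s, F s * (G s ^ n / (n.factorial : ℝ)) * mono4 e s)
        (∑ s, F s * Real.exp (G s) * mono4 e s) := by
      refine hasSum_sum fun s _ => ?_
      have h := NormedSpace.expSeries_div_hasSum_exp (G s)
      rw [← Real.exp_eq_exp_ℝ] at h
      exact (h.mul_left _).mul_right _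
    refine key.nonneg fun n => ?_
    have := QC_mul (QC_pow hG n) (QC_const (L := L) (c := ((n.factorial : ℝ))⁻¹) (by positivity)) F hF e
    simpa only [div_eq_mul_inv] using this

end cone

/-- Splitting four copies. -/
def split4 (L : Type) : (L → S4) ≃ (L → Bool) × (L → Bool) × (L → Bool) × (L → Bool) where
  toFun s := (fun x => (s x).1, fun x => (s x).2.1, fun x => (s x).2.2.1, fun x => (s x).2.2.2)
  invFun p x := (p.1 x, p.2.1 x, p.2.2.1 x, p.2.2.2 x)
  left_inv _ := rfl
  right_inv _ := rfl

lemma sum_four {A : Type} [Fintype A] (f1 f2 f3 f4 : A → ℝ) :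
    ∑ p : A × A × A × A, f1 p.1 * f2 p.2.1 * f3 p.2.2.1 * f4 p.2.2.2 =
      (∑ a, f1 a) * (∑ a, f2 a) * (∑ a, f3 a) * (∑ a, f4 a) := by
  simp only [Fintype.sum_prod_type, ← Finset.mul_sum, ← Finset.sum_mul, mul_assoc]

lemma hamil_four (N : ℕ) [NeZero N] (kk : Lat N → ℝ) (β b : ℝ) (s : Lat N → S4) :
    hamil N kk β b (fun x => spin (s x).1) + hamil N kk β b (fun x => spin (s x).2.1) +
    hamil N kk β 0 (fun x => spin (s x).2.2.1) + hamil N kk β 0 (fun x => spin (s x).2.2.2) =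
    β / 2 * (∑ x, ∑ y, kk (x - y) * (rot 0 (s x) * rot 0 (s y) + rot 1 (s x) * rot 1 (s y) +
      rot 2 (s x) * rot 2 (s y) + rot 3 (s x) * rot 3 (s y))) +
      b * ∑ x, (rot 0 (s x) + rot 1 (s x)) := by
  have h1 : ∀ x y, kk (x - y) * (rot 0 (s x) * rot 0 (s y) + rot 1 (s x) * rot 1 (s y) +
      rot 2 (s x) * rot 2 (s y) + rot 3 (s x) * rot 3 (s y)) =
      kk (x - y) * spin (s x).1 * spin (s y).1 + kk (x - y) * spin (s x).2.1 * spin (s y).2.1 +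
      kk (x - y) * spin (s x).2.2.1 * spin (s y).2.2.1 +
      kk (x - y) * spin (s x).2.2.2 * spin (s y).2.2.2 := by
    intro x y; simp only [rot]; ring
  have h2 : ∀ x, rot 0 (s x) + rot 1 (s x) = spin (s x).1 + spin (s x).2.1 := by
    intro x; simp only [rot]; ring
  simp only [h1, h2, Finset.sum_add_distrib, hamil]
  ring

lemma four_ineq (N : ℕ) [NeZero N] (kk : Lat N → ℝ) (hk0 : ∀ z, 0 ≤ kk z)
    (β b : ℝ) (hβ : 0 < β) (hb : 0 ≤ b) (x y : Lat N) :
    0 ≤ ∑ s : Lat N → S4,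
      Real.exp (hamil N kk β b (fun x => spin (s x).1) + hamil N kk β b (fun x => spin (s x).2.1) +
        hamil N kk β 0 (fun x => spin (s x).2.2.1) + hamil N kk β 0 (fun x => spin (s x).2.2.2)) *
      (rot 2 (s x) * rot 3 (s y) + rot 3 (s x) * rot 2 (s y)) := by
  simp only [hamil_four]
  have hJ : QC (fun s : Lat N → S4 =>
      β / 2 * (∑ x, ∑ y, kk (x - y) * (rot 0 (s x) * rot 0 (s y) + rot 1 (s x) * rot 1 (s y) +
      rot 2 (s x) * rot 2 (s y) + rot 3 (s x) * rot 3 (s y))) +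
      b * ∑ x, (rot 0 (s x) + rot 1 (s x))) := by
    refine QC_add (QC_mul (QC_const (by positivity)) (QC_sum _ _ fun u => QC_sum _ _ fun v =>
      QC_mul (QC_const (hk0 _)) ?_)) (QC_mul (QC_const hb) (QC_sum _ _ fun u => ?_))
    · exact QC_add (QC_add (QC_add (QC_mul (QC_rot _ _) (QC_rot _ _))
        (QC_mul (QC_rot _ _) (QC_rot _ _))) (QC_mul (QC_rot _ _) (QC_rot _ _)))
        (QC_mul (QC_rot _ _) (QC_rot _ _))
    · exact QC_add (QC_rot _ _) (QC_rot _ _)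
  have h := QC_mul (QC_exp hJ) (QC_add (QC_mul (QC_rot x 2) (QC_rot y 3))
    (QC_mul (QC_rot x 3) (QC_rot y 2))) _ KC_one 0
  simpa [mono4] using h

/-- the spin covariance is decreased by a nonnegative external field
(consequence of the GHS inequality), for any ferromagnetic pair potential. -/
theorem statement3 (N : ℕ) [NeZero N] (kk : Lat N → ℝ) (hk0 : ∀ z, 0 ≤ kk z)
    (hke : ∀ z, kk (-z) = kk z) (hk1 : (∑ z : Lat N, kk z) = 1) (hkz : kk 0 = 0)
    (β b : ℝ) (hβ : 0 < β) (hb : 0 ≤ b) (x y : Lat N) :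
    gibbsE N kk β b (fun σ => σ x * σ y) -
      gibbsE N kk β b (fun σ => σ x) * gibbsE N kk β b (fun σ => σ y) ≤
    gibbsE N kk β 0 (fun σ => σ x * σ y) -
      gibbsE N kk β 0 (fun σ => σ x) * gibbsE N kk β 0 (fun σ => σ y) := by
  have h4 := four_ineq N kk hk0 β b hβ hb x y
  rw [← (split4 (Lat N)).symm.sum_comp] at h4
  unfold gibbsE
  set w : ℝ → (Lat N → Bool) → ℝ :=
    fun b s => Real.exp (hamil N kk β b (fun x => spin (s x))) with hw
  change _ / (∑ s, w b s) - _ / (∑ s, w b s) * (_ / (∑ s, w b s)) ≤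
    _ / (∑ s, w 0 s) - _ / (∑ s, w 0 s) * (_ / (∑ s, w 0 s))
  have hZ : ∀ b, 0 < ∑ s, w b s := fun b =>
    Finset.sum_pos (fun s _ => Real.exp_pos _) Finset.univ_nonempty
  have hb' := hZ b
  have h0' := hZ 0
  set X : (Lat N → Bool) → ℝ := fun s => spin (s x) with hX
  set Y : (Lat N → Bool) → ℝ := fun s => spin (s y) with hY
  change (∑ s, w b s * (X s * Y s)) / _ - (∑ s, w b s * X s) / _ * ((∑ s, w b s * Y s) / _) ≤
    (∑ s, w 0 s * (X s * Y s)) / _ - (∑ s, w 0 s * X s) / _ * ((∑ s, w 0 s * Y s) / _)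
  have e : ∀ p : (Lat N → Bool) × (Lat N → Bool) × (Lat N → Bool) × (Lat N → Bool),
      Real.exp (hamil N kk β b (fun x => spin ((split4 (Lat N)).symm p x).1) +
        hamil N kk β b (fun x => spin ((split4 (Lat N)).symm p x).2.1) +
        hamil N kk β 0 (fun x => spin ((split4 (Lat N)).symm p x).2.2.1) +
        hamil N kk β 0 (fun x => spin ((split4 (Lat N)).symm p x).2.2.2)) *
      (rot 2 ((split4 (Lat N)).symm p x) * rot 3 ((split4 (Lat N)).symm p y) +
        rot 3 ((split4 (Lat N)).symm p x) * rot 2 ((split4 (Lat N)).symm p y)) =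
      2⁻¹ * (w b p.1 * w b p.2.1 * (w 0 p.2.2.1 * (X p.2.2.1 * Y p.2.2.1)) * w 0 p.2.2.2
      - w b p.1 * w b p.2.1 * (w 0 p.2.2.1 * X p.2.2.1) * (w 0 p.2.2.2 * Y p.2.2.2)
      - w b p.1 * w b p.2.1 * (w 0 p.2.2.1 * Y p.2.2.1) * (w 0 p.2.2.2 * X p.2.2.2)
      + w b p.1 * w b p.2.1 * w 0 p.2.2.1 * (w 0 p.2.2.2 * (X p.2.2.2 * Y p.2.2.2))
      - (w b p.1 * (X p.1 * Y p.1)) * w b p.2.1 * w 0 p.2.2.1 * w 0 p.2.2.2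
      + (w b p.1 * X p.1) * (w b p.2.1 * Y p.2.1) * w 0 p.2.2.1 * w 0 p.2.2.2
      + (w b p.1 * Y p.1) * (w b p.2.1 * X p.2.1) * w 0 p.2.2.1 * w 0 p.2.2.2
      - w b p.1 * (w b p.2.1 * (X p.2.1 * Y p.2.1)) * w 0 p.2.2.1 * w 0 p.2.2.2) := by
    rintro ⟨p1, p2, p3, p4⟩
    simp only [Real.exp_add, split4, Equiv.coe_fn_symm_mk, rot, hw, hX, hY]
    ring
  rw [Finset.sum_congr rfl fun p _ => e p, ← Finset.mul_sum] at h4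
  simp only [Finset.sum_add_distrib, Finset.sum_sub_distrib] at h4
  rw [sum_four (w b) (w b) (fun s => w 0 s * (X s * Y s)) (w 0),
    sum_four (w b) (w b) (fun s => w 0 s * X s) (fun s => w 0 s * Y s),
    sum_four (w b) (w b) (fun s => w 0 s * Y s) (fun s => w 0 s * X s),
    sum_four (w b) (w b) (w 0) (fun s => w 0 s * (X s * Y s)),
    sum_four (fun s => w b s * (X s * Y s)) (w b) (w 0) (w 0),
    sum_four (fun s => w b s * X s) (fun s => w b s * Y s) (w 0) (w 0),
    sum_four (fun s => w b s * Y s) (fun s => w b s * X s) (w 0) (w 0),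
    sum_four (w b) (fun s => w b s * (X s * Y s)) (w 0) (w 0)] at h4
  generalize (∑ s, w b s) = Zb at *
  generalize (∑ s, w 0 s) = Z0 at *
  generalize (∑ s, w b s * (X s * Y s)) = Bxy at *
  generalize (∑ s, w 0 s * (X s * Y s)) = Oxy at *
  generalize (∑ s, w b s * X s) = Bx at *
  generalize (∑ s, w b s * Y s) = By at *
  generalize (∑ s, w 0 s * X s) = Ox at *
  generalize (∑ s, w 0 s * Y s) = Oy at *
  have key : Oxy / Z0 - Ox / Z0 * (Oy / Z0) - (Bxy / Zb - Bx / Zb * (By / Zb)) =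
      (Zb * Zb * Oxy * Z0 - Zb * Zb * Ox * Oy - Bxy * Zb * Z0 * Z0 + Bx * By * Z0 * Z0) /
        (Zb ^ 2 * Z0 ^ 2) := by
    field_simp
    ring
  have : 0 ≤ Oxy / Z0 - Ox / Z0 * (Oy / Z0) - (Bxy / Zb - Bx / Zb * (By / Zb)) := by
    rw [key]
    apply div_nonneg _ (by positivity)
    linarith
  linarith

end IsingKac
end
end

section
/- Fix A ∈ ℝ and an even integer p ≥ 2. There exist γ₀ > 0 and a constant C(p) > 0 such that for all γ = N^{−1/2} ≤ γ₀, the Gibbs expectation of the discrete L^p norm of the fluctuation field satisfies E^γ_{β,0}[ Σ_{x∈Λ_ε} ε² |X_γ(x)|^p ] ≤ C(p) γ^{−p/2}, where β = 1 + γ²(𝔠_γ + A). -/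
open scoped BigOperators ENNReal
open MeasureTheory

noncomputable section

namespace IsingKac

open scoped NNReal

lemma tanh_bound_aux (x : ℝ) (hx0 : 0 ≤ x) (hx2 : x ≤ 2) :
    Real.tanh x ≤ x - x^3/40 := by
  have hmono : MonotoneOn (fun y : ℝ => (y - y^3/40) * Real.cosh y - Real.sinh y) (Set.Icc 0 2) := by
    apply monotoneOn_of_deriv_nonneg (convex_Icc 0 2)
    · fun_prop
    · fun_prop
    · intro y hy
      rw [interior_Icc] at hy
      have hd : HasDerivAt (fun y : ℝ => (y - y^3/40) * Real.cosh y - Real.sinh y)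
          ((1 - (3 * y^2)/40) * Real.cosh y + (y - y^3/40) * Real.sinh y - Real.cosh y) y := by
        have h1 : HasDerivAt (fun y : ℝ => y - y^3/40) (1 - (3 * y^2)/40) y := by
          have := (hasDerivAt_id y).sub ((hasDerivAt_pow 3 y).div_const 40)
          refine HasDerivAt.congr_deriv this ?_
          norm_num
        exact (h1.mul (Real.hasDerivAt_cosh y)).sub (Real.hasDerivAt_sinh y)
      rw [hd.deriv]
      have hs : y ≤ Real.sinh y := Real.self_le_sinh_iff.2 hy.1.le
      have hc : Real.cosh y ≤ 9 := by
        have h1 : Real.exp y ≤ Real.exp 1 * Real.exp 1 := by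
          rw [← Real.exp_add]; exact Real.exp_le_exp.2 (by linarith [hy.2])
        have h2 := Real.exp_one_lt_d9
        have h3 : Real.exp 1 * Real.exp 1 ≤ 2.72 * 2.72 := by
          apply mul_le_mul <;> first | positivity | linarith
        have h4 : Real.exp (-y) ≤ 1 := Real.exp_le_one_iff.2 (by linarith [hy.1])
        rw [Real.cosh_eq]; linarith
      have hy1 := hy.1
      have hy2 := hy.2
      have h5 : 0 ≤ y - y^3/40 := by
        have : y^3 = y * y * y := by ring
        nlinarith [mul_pos hy1 hy1]
      have h6 : (y - y^3/40) * y ≤ (y - y^3/40) * Real.sinh y := by gcongr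
      have h7 : 3 * y^2/40 * Real.cosh y ≤ 3 * y^2/40 * 9 := by gcongr
      have h8 : y^2 * y^2 ≤ 4 * y^2 := by
        have : y^2 ≤ 4 := by nlinarith
        gcongr
      nlinarith [mul_pos hy1 hy1]
  have h := hmono (Set.left_mem_Icc.2 (by norm_num)) ⟨hx0, hx2⟩ hx0
  simp only [Real.cosh_zero, Real.sinh_zero] at h
  rw [Real.tanh_eq_sinh_div_cosh, div_le_iff₀ (Real.cosh_pos x)]
  norm_num at h
  linarith

lemma abs_tanh_eq (x : ℝ) : |Real.tanh x| = Real.tanh |x| := by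
  have key : ∀ y : ℝ, 0 ≤ y → 0 ≤ Real.tanh y := fun y hy => by
    rw [Real.tanh_eq_sinh_div_cosh]
    exact div_nonneg (Real.sinh_nonneg_iff.2 hy) (Real.cosh_pos y).le
  rcases le_total 0 x with h | h
  · rw [abs_of_nonneg h, abs_of_nonneg (key x h)]
  · rw [abs_of_nonpos h, Real.tanh_neg, abs_of_nonpos]
    have := key (-x) (by linarith)
    rw [Real.tanh_neg] at this; linarith

lemma tanh_pow_bound (β η h : ℝ) (p : ℕ) (hp : Even p) (hp2 : 2 ≤ p) (hη0 : 0 ≤ η) (hη1 : η ≤ 1)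
    (hβ : |β| ≤ 1 + η) (hh : |h| ≤ 1) :
    (Real.tanh (β * h))^p ≤ (1 + p * 2^(p-1) * η) * h^p - h^(p+2)/40 := by
  have e1 : (Real.tanh (β * h))^p = (Real.tanh |β * h|)^p := by
    rw [← abs_tanh_eq, hp.pow_abs]
  have e2 : h^p = |h|^p := (hp.pow_abs h).symm
  have e3 : h^(p+2) = |h|^(p+2) := ((hp.add even_two).pow_abs h).symm
  rw [e1, e2, e3]
  have hu : |β * h| ≤ (1+η) * |h| := by rw [abs_mul]; gcongr
  have hu0 := abs_nonneg (β * h)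
  have ha0 := abs_nonneg h
  have ht0 : 0 ≤ Real.tanh |β * h| := by rw [← abs_tanh_eq]; positivity
  generalize |h| = a at *
  generalize |β * h| = u at *
  set v := (1+η) * a with hv
  have hv2 : v ≤ 2 := by nlinarith
  have hv0 : 0 ≤ v := by positivity
  have t1 : Real.tanh u ≤ v - v^3/40 := by
    refine (tanh_bound_aux u hu0 (hu.trans hv2)).trans ?_
    have : v - v^3/40 - (u - u^3/40) = (v-u) * (1 - (u^2+u*v+v^2)/40) := by ring
    have h2 : 0 ≤ (v-u) * (1 - (u^2+u*v+v^2)/40) := by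
      apply mul_nonneg (by linarith)
      nlinarith
    linarith
  have t2 : v - v^3/40 = v * (1 - v^2/40) := by ring
  have t3 : 1 - v^2/40 ≤ 1 := by nlinarith [sq_nonneg v]
  have t4 : 0 ≤ 1 - v^2/40 := by nlinarith
  have t5 : (Real.tanh u)^p ≤ v^p * (1 - v^2/40) := by
    calc (Real.tanh u)^p ≤ (v * (1 - v^2/40))^p := by rw [← t2]; gcongr
      _ = v^p * (1 - v^2/40)^p := mul_pow _ _ _
      _ ≤ v^p * (1 - v^2/40) := by
        gcongr
        exact pow_le_of_le_one t4 t3 (by omega)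
  have t6 : (1+η)^p ≤ 1 + p * 2^(p-1) * η := by
    have := abs_pow_sub_pow_le (1+η) 1 p
    rw [one_pow, abs_of_nonneg (by linarith [one_le_pow₀ (n := p) (show (1:ℝ) ≤ 1+η by linarith)]),
      abs_of_nonneg (show 0 ≤ 1 + η - 1 by linarith), abs_one,
      abs_of_nonneg (show 0 ≤ 1 + η by linarith), max_eq_left (by linarith)] at this
    have h3 : (1+η)^(p-1) ≤ 2^(p-1) := by gcongr; linarith
    have h4 : (1+η-1) * p * (1+η)^(p-1) ≤ (1+η-1) * p * 2^(p-1) := by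
      gcongr; apply mul_nonneg <;> [linarith; positivity]
    linarith
  have t7 : a^(p+2) ≤ v^(p+2) := by gcongr; nlinarith
  calc (Real.tanh u)^p ≤ v^p * (1 - v^2/40) := t5
    _ = (1+η)^p * a^p - v^(p+2)/40 := by
      have : v^p = (1+η)^p * a^p := by rw [hv, mul_pow]
      rw [← this]; ring
    _ ≤ _ := by
      have : (1+η)^p * a^p ≤ (1 + p * 2^(p-1) * η) * a^p := by gcongr
      linarith

lemma young_pow (a b : ℝ) (ha : 0 ≤ a) (hb : 0 ≤ b) (n : ℕ) :
    (n+1) * (a^n * b) ≤ n * a^(n+1) + b^(n+1) := by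
  induction n with
  | zero => simp
  | succ n ih =>
    have h1 := mul_le_mul_of_nonneg_right ih hb
    have h2 : 0 ≤ (n+1) * a^n * (a-b)^2 := by positivity
    push_cast
    ring_nf at *
    nlinarith

/-- Flip the spin at `y`. -/
def flipAt {N : ℕ} (y : Lat N) (s : Lat N → Bool) : Lat N → Bool :=
  Function.update s y (!(s y))

lemma flipAt_flipAt {N : ℕ} (y : Lat N) (s : Lat N → Bool) : flipAt y (flipAt y s) = s := by
  simp [flipAt]

lemma spin_flipAt {N : ℕ} (y : Lat N) (s : Lat N → Bool) (x : Lat N) :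
    spin (flipAt y s x) = spin (s x) - (if x = y then 2 * spin (s y) else 0) := by
  by_cases h : x = y
  · subst h
    simp only [flipAt, Function.update_self, if_true]
    cases s x <;> simp [spin] <;> norm_num
  · simp [flipAt, h]

lemma spin_cases (b : Bool) : spin b = 1 ∨ spin b = -1 := by cases b <;> simp [spin]

lemma abs_spin (b : Bool) : |spin b| = 1 := by rcases spin_cases b with h | h <;> simp [h]

/-- Local field. -/
def hf (N : ℕ) [NeZero N] (kk : Lat N → ℝ) (s : Lat N → Bool) (x : Lat N) : ℝ :=
  ∑ y : Lat N, kk (x - y) * spin (s y)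

lemma hf_flipAt {N : ℕ} [NeZero N] (kk : Lat N → ℝ) (s : Lat N → Bool) (x y : Lat N) :
    hf N kk (flipAt y s) x = hf N kk s x - 2 * kk (x-y) * spin (s y) := by
  unfold hf
  simp_rw [spin_flipAt, mul_sub, Finset.sum_sub_distrib, mul_ite, mul_zero]
  simp
  ring

lemma hamil_eq {N : ℕ} [NeZero N] (kk : Lat N → ℝ) (β : ℝ) (s : Lat N → Bool) :
    hamil N kk β 0 (fun x => spin (s x)) = β/2 * ∑ x : Lat N, spin (s x) * hf N kk s x := by
  unfold hamil hf
  rw [zero_mul, add_zero]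
  simp only [Finset.mul_sum]
  refine Finset.sum_congr rfl fun x _ => Finset.sum_congr rfl fun y _ => by ring

lemma hamil_flipAt {N : ℕ} [NeZero N] (kk : Lat N → ℝ) (h0 : kk 0 = 0)
    (hev : ∀ z, kk (-z) = kk z) (β : ℝ) (s : Lat N → Bool) (y : Lat N) :
    hamil N kk β 0 (fun x => spin (flipAt y s x)) =
      hamil N kk β 0 (fun x => spin (s x)) - 2 * β * spin (s y) * hf N kk s y := by
  rw [hamil_eq, hamil_eq]
  simp_rw [hf_flipAt, spin_flipAt, sub_mul, mul_sub, Finset.sum_sub_distrib, ite_mul, zero_mul]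
  simp only [Finset.sum_ite_eq', Finset.mem_univ, if_true, sub_self, h0]
  have : ∑ x : Lat N, spin (s x) * (2 * kk (x - y) * spin (s y)) = 2 * spin (s y) * hf N kk s y := by
    unfold hf
    rw [Finset.mul_sum]
    refine Finset.sum_congr rfl fun x _ => ?_
    rw [← hev (x - y), neg_sub]; ring
  rw [this]; ring

/-- Unnormalised Gibbs weight. -/
def gw (N : ℕ) [NeZero N] (kk : Lat N → ℝ) (β : ℝ) (s : Lat N → Bool) : ℝ :=
  Real.exp (hamil N kk β 0 (fun x => spin (s x)))

lemma gw_pos {N : ℕ} [NeZero N] (kk : Lat N → ℝ) (β : ℝ) (s : Lat N → Bool) : 0 < gw N kk β s :=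
  Real.exp_pos _

lemma dlr {N : ℕ} [NeZero N] (kk : Lat N → ℝ) (h0 : kk 0 = 0)
    (hev : ∀ z, kk (-z) = kk z) (β : ℝ) (y : Lat N) (G : (Lat N → Bool) → ℝ)
    (hG : ∀ s, G (flipAt y s) = G s) :
    ∑ s, gw N kk β s * ((spin (s y) - Real.tanh (β * hf N kk s y)) * G s) = 0 := by
  set f : (Lat N → Bool) → ℝ :=
    fun s => gw N kk β s * ((spin (s y) - Real.tanh (β * hf N kk s y)) * G s) with hf'
  let e : (Lat N → Bool) ≃ (Lat N → Bool) :=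
    ⟨flipAt y, flipAt y, flipAt_flipAt y, flipAt_flipAt y⟩
  have h1 : ∑ s, f (e s) = ∑ s, f s := Equiv.sum_comp e f
  have h2 : ∀ s, f s + f (e s) = 0 := by
    intro s
    have e1 : e s = flipAt y s := rfl
    simp only [hf', e1, hG]
    have e2 : gw N kk β (flipAt y s) =
        gw N kk β s * Real.exp (- (2 * β * spin (s y) * hf N kk s y)) := by
      unfold gw; rw [← Real.exp_add, hamil_flipAt kk h0 hev]; rfl
    have e3 : spin (flipAt y s y) = - spin (s y) := by rw [spin_flipAt]; simp; ring
    have e4 : hf N kk (flipAt y s) y = hf N kk s y := by rw [hf_flipAt]; simp [h0]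
    rw [e2, e3, e4, Real.tanh_eq]
    set u := β * hf N kk s y with hu
    have hE : Real.exp u * Real.exp (-u) = 1 := by rw [← Real.exp_add]; simp
    have hp1 := Real.exp_pos u
    have hp2 := Real.exp_pos (-u)
    rcases spin_cases (s y) with h | h
    · have e5 : Real.exp (- (2 * β * spin (s y) * hf N kk s y)) = Real.exp (-u) * Real.exp (-u) := by
        rw [← Real.exp_add, h, hu]; congr 1; ring
      rw [e5, h]
      field_simp
      linear_combination (-2 * gw N kk β s * G s * Real.exp (-u)) * hE
    · have e5 : Real.exp (- (2 * β * spin (s y) * hf N kk s y)) = Real.exp u * Real.exp u := by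
        rw [← Real.exp_add, h, hu]; congr 1; ring
      rw [e5, h]
      field_simp
      linear_combination (2 * gw N kk β s * G s * Real.exp (u)) * hE
  have h3 : ∑ s, (f s + f (e s)) = 0 := Finset.sum_eq_zero fun s _ => h2 s
  rw [Finset.sum_add_distrib, h1] at h3
  linarith

lemma abs_hf_le {N : ℕ} [NeZero N] (kk : Lat N → ℝ) (hk : ∀ z, 0 ≤ kk z) (h1 : ∑ z, kk z = 1)
    (s : Lat N → Bool) (x : Lat N) : |hf N kk s x| ≤ 1 := by
  unfold hf
  refine (Finset.abs_sum_le_sum_abs _ _).trans ?_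
  simp_rw [abs_mul, abs_spin, mul_one, abs_of_nonneg (hk _)]
  rw [← h1]
  exact (Equiv.sum_comp (Equiv.subLeft x) kk).le

/-- Unnormalised moments. -/
def mom (N : ℕ) [NeZero N] (kk : Lat N → ℝ) (β : ℝ) (p : ℕ) : ℝ :=
  ∑ s, gw N kk β s * ∑ x : Lat N, (hf N kk s x)^p

lemma err_bound {N : ℕ} [NeZero N] (kk : Lat N → ℝ) (h0 : kk 0 = 0) (hk : ∀ z, 0 ≤ kk z)
    (hev : ∀ z, kk (-z) = kk z) (κ : ℝ) (hκ : ∀ z, kk z ≤ κ) (β : ℝ) (n : ℕ) (hn : Even n)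
    (x y : Lat N) :
    ∑ s, gw N kk β s * (spin (s y) * (hf N kk s x)^(n+1)) ≤
      ∑ s, gw N kk β s * (Real.tanh (β * hf N kk s y) * (hf N kk s x)^(n+1)
        + 2 * (κ * (n+1)) * (2^n * ((hf N kk s x)^n + κ^n))) := by
  have hκ0 : 0 ≤ κ := (hk 0).trans (hκ 0)
  have hd := dlr kk h0 hev β y (fun s => (hf N kk s x - kk (x-y) * spin (s y))^(n+1)) (by
    intro s
    have e3 : spin (flipAt y s y) = - spin (s y) := by rw [spin_flipAt]; simp; ring
    simp only [e3, hf_flipAt]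
    congr 1; ring)
  have hd' := neg_eq_zero.2 hd
  rw [← Finset.sum_neg_distrib] at hd'
  simp_rw [← mul_neg] at hd'
  rw [← sub_nonneg, ← Finset.sum_sub_distrib, ← hd', ← sub_nonneg, ← Finset.sum_sub_distrib]
  refine Finset.sum_nonneg fun s _ => ?_
  rw [← mul_sub, ← mul_sub]
  refine mul_nonneg (gw_pos _ _ _).le ?_
  set h := hf N kk s x
  set t := Real.tanh (β * hf N kk s y)
  set σ := spin (s y) with hσ
  have hσ1 : |σ| = 1 := abs_spin _
  have ht : |t| ≤ 1 := (Real.abs_tanh_lt_one _).le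
  have h1 : |σ - t| ≤ 2 := (abs_sub _ _).trans (by linarith)
  have hks : |kk (x-y) * σ| ≤ κ := by
    rw [abs_mul, hσ1, mul_one, abs_of_nonneg (hk _)]; exact hκ _
  have h2 := abs_pow_sub_pow_le h (h - kk (x-y) * σ) (n+1)
  rw [sub_sub_cancel, Nat.add_sub_cancel] at h2
  have h3 : max |h| |h - kk (x-y) * σ| ≤ |h| + κ :=
    max_le (by linarith) ((abs_sub _ _).trans (by linarith))
  have h4 : (|h| + κ)^n ≤ 2^n * (h^n + κ^n) := by
    refine (add_pow_le (abs_nonneg h) hκ0 n).trans ?_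
    rw [hn.pow_abs]
    have : 0 ≤ h^n := hn.pow_nonneg h
    gcongr
    · norm_num
    · omega
  have h5 : |h^(n+1) - (h - kk (x-y) * σ)^(n+1)| ≤ κ * (n+1) * (2^n * (h^n + κ^n)) := by
    refine h2.trans ?_
    push_cast
    have : max |h| |h - kk (x-y) * σ| ^ n ≤ (2^n * (h^n + κ^n)) :=
      le_trans (by gcongr) h4
    gcongr
  have h6 : (σ - t) * (h^(n+1) - (h - kk (x-y) * σ)^(n+1)) ≤ 2 * (κ * (n+1) * (2^n * (h^n + κ^n))) := by
    refine (le_abs_self _).trans ?_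
    rw [abs_mul]
    gcongr
  linarith

lemma sum_row {N : ℕ} [NeZero N] (kk : Lat N → ℝ) (h1 : ∑ z, kk z = 1) (x : Lat N) :
    ∑ y, kk (x - y) = 1 := by
  rw [← h1]; exact Equiv.sum_comp (Equiv.subLeft x) kk

lemma sum_col {N : ℕ} [NeZero N] (kk : Lat N → ℝ) (h1 : ∑ z, kk z = 1) (y : Lat N) :
    ∑ x, kk (x - y) = 1 := by
  rw [← h1]; exact Equiv.sum_comp (Equiv.subRight y) kk

lemma mom_step {N : ℕ} [NeZero N] (kk : Lat N → ℝ) (h0 : kk 0 = 0) (hk : ∀ z, 0 ≤ kk z)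
    (hev : ∀ z, kk (-z) = kk z) (h1 : ∑ z, kk z = 1) (κ : ℝ) (hκ : ∀ z, kk z ≤ κ)
    (β η : ℝ) (hη0 : 0 ≤ η) (hη1 : η ≤ 1) (hβ : |β| ≤ 1 + η) (n : ℕ) (hn : Even n) :
    mom N kk β (n+4) ≤ 40 * ((n+2) * 2^(n+1) * η * mom N kk β (n+2) +
      (n+2) * (2 * (κ * (n+1)) * 2^n) * (mom N kk β n + κ^n * mom N kk β 0)) := by
  -- first: expand one factor of h
  have hA : mom N kk β (n+2) ≤ ∑ s, gw N kk β s * ∑ x : Lat N, ∑ y : Lat N, kk (x-y) *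
      (Real.tanh (β * hf N kk s y) * (hf N kk s x)^(n+1)
        + 2 * (κ * (n+1)) * (2^n * ((hf N kk s x)^n + κ^n))) := by
    have e1 : mom N kk β (n+2) = ∑ x : Lat N, ∑ y : Lat N, kk (x-y) *
        ∑ s, gw N kk β s * (spin (s y) * (hf N kk s x)^(n+1)) := by
      unfold mom
      simp_rw [Finset.mul_sum]
      rw [Finset.sum_comm]
      refine Finset.sum_congr rfl fun x _ => ?_
      rw [Finset.sum_comm]
      refine Finset.sum_congr rfl fun s _ => ?_
      have : (hf N kk s x)^(n+2) = (∑ y, kk (x-y) * spin (s y)) * (hf N kk s x)^(n+1) := by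
        rw [show n+2 = (n+1)+1 by ring, pow_succ' _ (n+1)]; rfl
      rw [this, Finset.sum_mul, Finset.mul_sum]
      refine Finset.sum_congr rfl fun y _ => by ring
    have e2 : (∑ s, gw N kk β s * ∑ x : Lat N, ∑ y : Lat N, kk (x-y) *
      (Real.tanh (β * hf N kk s y) * (hf N kk s x)^(n+1)
        + 2 * (κ * (n+1)) * (2^n * ((hf N kk s x)^n + κ^n)))) = ∑ x : Lat N, ∑ y : Lat N, kk (x-y) *
        ∑ s, gw N kk β s * (Real.tanh (β * hf N kk s y) * (hf N kk s x)^(n+1)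
        + 2 * (κ * (n+1)) * (2^n * ((hf N kk s x)^n + κ^n))) := by
      simp_rw [Finset.mul_sum]
      rw [Finset.sum_comm]
      refine Finset.sum_congr rfl fun x _ => ?_
      rw [Finset.sum_comm]
      refine Finset.sum_congr rfl fun s _ => ?_
      refine Finset.sum_congr rfl fun y _ => by ring
    rw [e1, e2]
    refine Finset.sum_le_sum fun x _ => Finset.sum_le_sum fun y _ => ?_
    exact mul_le_mul_of_nonneg_left (err_bound kk h0 hk hev κ hκ β n hn x y) (hk _)
  have hn2 : Even (n+2) := hn.add even_two
  -- pointwise bound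
  have hB : ∀ s, (n+2) * (∑ x : Lat N, ∑ y : Lat N, kk (x-y) *
      (Real.tanh (β * hf N kk s y) * (hf N kk s x)^(n+1)
        + 2 * (κ * (n+1)) * (2^n * ((hf N kk s x)^n + κ^n)))) ≤
      ∑ x : Lat N, ((n+1) * (hf N kk s x)^(n+2) + ((1 + (n+2) * 2^(n+1) * η) * (hf N kk s x)^(n+2)
        - (hf N kk s x)^(n+4)/40)
        + (n+2) * (2 * (κ * (n+1)) * (2^n * ((hf N kk s x)^n + κ^n * (hf N kk s x)^0)))) := by
    intro s
    have c1 : ∀ x y : Lat N, (n+2) * (kk (x-y) * (Real.tanh (β * hf N kk s y) * (hf N kk s x)^(n+1)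
        + 2 * (κ * (n+1)) * (2^n * ((hf N kk s x)^n + κ^n)))) ≤
        kk (x-y) * ((n+1) * (hf N kk s x)^(n+2) +
           (n+2) * (2 * (κ * (n+1)) * (2^n * ((hf N kk s x)^n + κ^n * (hf N kk s x)^0))))
         + kk (x-y) * (Real.tanh (β * hf N kk s y))^(n+2) := by
      intro x y
      rw [← mul_add]
      have : (n+2) * (kk (x-y) * (Real.tanh (β * hf N kk s y) * (hf N kk s x)^(n+1)
        + 2 * (κ * (n+1)) * (2^n * ((hf N kk s x)^n + κ^n)))) =
        kk (x-y) * ((n+2) * (Real.tanh (β * hf N kk s y) * (hf N kk s x)^(n+1)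
        + 2 * (κ * (n+1)) * (2^n * ((hf N kk s x)^n + κ^n)))) := by ring
      rw [this]
      refine mul_le_mul_of_nonneg_left ?_ (hk _)
      have hy := young_pow |hf N kk s x| |Real.tanh (β * hf N kk s y)| (abs_nonneg _)
        (abs_nonneg _) (n+1)
      rw [show n+1+1 = n+2 by ring, hn2.pow_abs, hn2.pow_abs] at hy
      have h2 : Real.tanh (β * hf N kk s y) * (hf N kk s x)^(n+1) ≤
          |hf N kk s x|^(n+1) * |Real.tanh (β * hf N kk s y)| := by
        refine (le_abs_self _).trans ?_
        rw [abs_mul, abs_pow, mul_comm]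
      push_cast at hy
      have h3 : ((n:ℝ)+2) * (Real.tanh (β * hf N kk s y) * (hf N kk s x)^(n+1)) ≤ ((n:ℝ)+2) *
          (|hf N kk s x|^(n+1) * |Real.tanh (β * hf N kk s y)|) := by gcongr
      rw [pow_zero]
      linarith
    simp_rw [Finset.mul_sum]
    refine (Finset.sum_le_sum fun x _ => Finset.sum_le_sum fun y _ => c1 x y).trans ?_
    simp_rw [Finset.sum_add_distrib, ← Finset.sum_mul, sum_row kk h1, one_mul]
    have c2 : ∑ x : Lat N, ∑ y : Lat N, kk (x-y) * (Real.tanh (β * hf N kk s y))^(n+2) ≤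
        ∑ y : Lat N, ((1 + (n+2) * 2^(n+1) * η) * (hf N kk s y)^(n+2)
        - (hf N kk s y)^(n+4)/40) := by
      rw [Finset.sum_comm]
      simp_rw [← Finset.sum_mul, sum_col kk h1, one_mul]
      refine Finset.sum_le_sum fun y _ => ?_
      have := tanh_pow_bound β η (hf N kk s y) (n+2) hn2 (by omega) hη0 hη1 hβ
        (abs_hf_le kk hk h1 s y)
      push_cast at this
      exact this
    have c3 := Finset.sum_add_distrib (s := Finset.univ) (f := fun x : Lat N => (n+1) * (hf N kk s x)^(n+2))
      (g := fun x : Lat N => (n+2) * (2 * (κ * (n+1)) * (2^n * ((hf N kk s x)^n + κ^n * (hf N kk s x)^0))))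
    linarith
  have hC : (n+2) * mom N kk β (n+2) ≤ ∑ s, gw N kk β s * 
      ∑ x : Lat N, ((n+1) * (hf N kk s x)^(n+2) + ((1 + (n+2) * 2^(n+1) * η) * (hf N kk s x)^(n+2)
        - (hf N kk s x)^(n+4)/40)
        + (n+2) * (2 * (κ * (n+1)) * (2^n * ((hf N kk s x)^n + κ^n * (hf N kk s x)^0)))) := by
    refine (mul_le_mul_of_nonneg_left hA (by positivity)).trans ?_
    rw [Finset.mul_sum]
    refine Finset.sum_le_sum fun s _ => ?_
    have := mul_le_mul_of_nonneg_left (hB s) (gw_pos kk β s).le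
    linarith
  have hD : ∑ s, gw N kk β s * 
      ∑ x : Lat N, ((n+1) * (hf N kk s x)^(n+2) + ((1 + (n+2) * 2^(n+1) * η) * (hf N kk s x)^(n+2)
        - (hf N kk s x)^(n+4)/40)
        + (n+2) * (2 * (κ * (n+1)) * (2^n * ((hf N kk s x)^n + κ^n * (hf N kk s x)^0)))) =
      (n+1) * mom N kk β (n+2) + ((1 + (n+2) * 2^(n+1) * η) * mom N kk β (n+2)
        - mom N kk β (n+4)/40)
        + (n+2) * (2 * (κ * (n+1)) * (2^n * (mom N kk β n + κ^n * mom N kk β 0))) := by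
    unfold mom
    simp only [Finset.mul_sum, Finset.sum_div, ← Finset.sum_add_distrib, ← Finset.sum_sub_distrib]
    refine Finset.sum_congr rfl fun s _ => Finset.sum_congr rfl fun x _ => by ring
  rw [hD] at hC
  linarith

lemma mom_zero_nonneg {N : ℕ} [NeZero N] (kk : Lat N → ℝ) (β : ℝ) : 0 ≤ mom N kk β 0 :=
  Finset.sum_nonneg fun s _ => mul_nonneg (gw_pos _ _ _).le (Finset.sum_nonneg fun x _ => by simp)

lemma mom_young {N : ℕ} [NeZero N] (kk : Lat N → ℝ) (β l : ℝ) :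
    2 * l * mom N kk β 2 ≤ mom N kk β 4 + l^2 * mom N kk β 0 := by
  unfold mom
  simp only [Finset.mul_sum, ← Finset.sum_add_distrib]
  refine Finset.sum_le_sum fun s _ => Finset.sum_le_sum fun x _ => ?_
  have := mul_nonneg (gw_pos kk β s).le (sq_nonneg ((hf N kk s x)^2 - l))
  nlinarith

/-- The structural hypotheses on the kernel and the temperature. -/
structure GoodKernel (N : ℕ) [NeZero N] (kk : Lat N → ℝ) (β γ K : ℝ) : Prop where
  zero : kk 0 = 0
  nonneg : ∀ z, 0 ≤ kk z
  even : ∀ z, kk (-z) = kk z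
  sum_one : ∑ z, kk z = 1
  upper : ∀ z, kk z ≤ K * γ^2
  beta : |β| ≤ 1 + K * γ
  small : K * γ ≤ 1

lemma mom_two_four (K : ℝ) (hK : 0 < K) :
    ∃ C : ℝ, 0 < C ∧ ∀ (N : ℕ) [NeZero N] (kk : Lat N → ℝ) (β γ : ℝ), 0 < γ → γ ≤ 1 →
      GoodKernel N kk β γ K → mom N kk β 2 ≤ C * γ * mom N kk β 0 := by
  refine ⟨((160*K)^2 + 640*K + 1)/2, by positivity, ?_⟩
  intro N _ kk β γ hγ0 hγ1 h
  have h1 := mom_step kk h.zero h.nonneg h.even h.sum_one _ h.upper β (K*γ) (by positivity) h.small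
    h.beta 0 (by simp)
  norm_num at h1
  have h2 := mom_young kk β (160 * K * γ)
  have h3 := mom_young kk β γ
  have h0 := mom_zero_nonneg kk β
  have h4 : 2 * γ * mom N kk β 2 ≤ ((160*K)^2 + 640*K + 1) * γ^2 * mom N kk β 0 := by
    nlinarith
  have h5 : 2 * γ * mom N kk β 2 ≤ 2 * γ * (((160*K)^2 + 640*K + 1)/2 * γ * mom N kk β 0) := by
    refine h4.trans (le_of_eq ?_); ring
  exact le_of_mul_le_mul_left h5 (by positivity)

lemma mom_all (K : ℝ) (hK : 0 < K) (k : ℕ) :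
    ∃ C : ℝ, 0 < C ∧ ∀ (N : ℕ) [NeZero N] (kk : Lat N → ℝ) (β γ : ℝ), 0 < γ → γ ≤ 1 →
      GoodKernel N kk β γ K → mom N kk β (2*k) ≤ C * γ^k * mom N kk β 0 := by
  induction k using Nat.twoStepInduction with
  | zero => exact ⟨1, one_pos, fun N _ kk β γ _ _ _ => by simp⟩
  | one =>
    obtain ⟨C, hC, h⟩ := mom_two_four K hK
    exact ⟨C, hC, fun N _ kk β γ h0 h1 hg => by simpa using h N kk β γ h0 h1 hg⟩
  | more j ih0 ih1 =>
    obtain ⟨C0, hC0, h0⟩ := ih0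
    obtain ⟨C1, hC1, h1⟩ := ih1
    refine ⟨40 * (((2*j:ℕ)+2) * 2^(2*j+1) * K * C1 +
      ((2*j:ℕ)+2) * (2 * (K * ((2*j:ℕ)+1)) * 2^(2*j)) * (C0 + K^(2*j))), by positivity, ?_⟩
    intro N _ kk β γ hγ0 hγ1 hg
    have hm := mom_step kk hg.zero hg.nonneg hg.even hg.sum_one _ hg.upper β (K*γ) (by positivity)
      hg.small hg.beta (2*j) (by simp)
    have g0 := h0 N kk β γ hγ0 hγ1 hg
    have g1 := h1 N kk β γ hγ0 hγ1 hg
    have hz := mom_zero_nonneg kk β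
    rw [show 2*(j+1) = 2*j+2 by ring] at g1
    rw [show 2*(j+2) = 2*j+4 by ring]
    refine hm.trans ?_
    have hγj : (γ^2)^(2*j) ≤ γ^j := by
      rw [← pow_mul]; exact pow_le_pow_of_le_one hγ0.le hγ1 (by omega)
    have e1 : (K*γ^2)^(2*j) * mom N kk β 0 ≤ K^(2*j) * γ^j * mom N kk β 0 := by
      rw [mul_pow]; gcongr
    calc _ = 40 * (((2*j:ℕ)+2) * 2^(2*j+1) * (K*γ) * mom N kk β (2*j+2) +
      ((2*j:ℕ)+2) * (2 * (K*γ^2 * ((2*j:ℕ)+1)) * 2^(2*j)) * (mom N kk β (2*j) + (K*γ^2)^(2*j) * mom N kk β 0))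
      := rfl
      _ ≤ 40 * (((2*j:ℕ)+2) * 2^(2*j+1) * (K*γ) * (C1 * γ^(j+1) * mom N kk β 0) +
      ((2*j:ℕ)+2) * (2 * (K*γ^2 * ((2*j:ℕ)+1)) * 2^(2*j)) * (C0 * γ^j * mom N kk β 0 + K^(2*j) * γ^j * mom N kk β 0)) := by
        gcongr
      _ = _ := by ring

lemma latRep_eq (N : ℕ) [NeZero N] (v : ZMod (2*N)) : latRep N v = v.valMinAbs := by
  rw [ZMod.valMinAbs_def_pos]
  unfold latRep
  have : 2 * N / 2 = N := by omega
  rw [this]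
  push_cast
  simp only [Nat.cast_le]

lemma latRep_cast (N : ℕ) [NeZero N] (v : ZMod (2*N)) : ((latRep N v : ℤ) : ZMod (2*N)) = v := by
  rw [latRep_eq]; exact ZMod.coe_valMinAbs v

lemma latRep_inj (N : ℕ) [NeZero N] : Function.Injective (latRep N) := fun a b h => by
  rw [← latRep_cast N a, h, latRep_cast]

lemma latRep_zero (N : ℕ) [NeZero N] : latRep N 0 = 0 := by simp [latRep]

lemma latRep_abs_neg (N : ℕ) [NeZero N] (v : ZMod (2*N)) : |latRep N (-v)| = |latRep N v| := by
  rw [latRep_eq, latRep_eq, Int.abs_eq_natAbs, Int.abs_eq_natAbs, ZMod.natAbs_valMinAbs_neg]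

lemma latRep_abs_le (N : ℕ) [NeZero N] (v : ZMod (2*N)) : |latRep N v| ≤ N := by
  have h := ZMod.natAbs_valMinAbs_le v
  rw [latRep_eq, Int.abs_eq_natAbs]
  omega

lemma latRep_intCast (N : ℕ) [NeZero N] (a : ℤ) (ha : |a| < N) :
    latRep N ((a : ℤ) : ZMod (2*N)) = a := by
  rw [latRep_eq, ZMod.valMinAbs_spec]
  rw [abs_lt] at ha
  refine ⟨rfl, ?_⟩
  push_cast
  constructor <;> linarith [ha.1, ha.2]

lemma count_box (N : ℕ) [NeZero N] (R : ℕ) :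
    ((Finset.univ.filter fun z : Lat N => |latRep N z.1| ≤ R ∧ |latRep N z.2| ≤ R).card : ℝ)
      ≤ (2*R+1)^2 := by
  have h : (Finset.univ.filter fun z : Lat N => |latRep N z.1| ≤ R ∧ |latRep N z.2| ≤ R).card ≤
      ((Finset.Icc (-(R:ℤ)) R) ×ˢ (Finset.Icc (-(R:ℤ)) R)).card := by
    apply Finset.card_le_card_of_injOn (latRep2 N)
    · intro z hz
      simp only [Finset.coe_filter, Finset.mem_univ, true_and, Set.mem_ofPred_eq] at hz
      simp only [latRep2, Finset.coe_product, Set.mem_prod, Finset.coe_Icc, Set.mem_Icc]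
      exact ⟨abs_le.1 hz.1, abs_le.1 hz.2⟩
    · intro a _ b _ hab
      simp only [latRep2, Prod.mk.injEq] at hab
      exact Prod.ext (latRep_inj N hab.1) (latRep_inj N hab.2)
  rw [Finset.card_product, Int.card_Icc] at h
  have e : ((R:ℤ) + 1 - -(R:ℤ)).toNat = 2*R+1 := by omega
  rw [e] at h
  calc _ ≤ (((2*R+1)*(2*R+1) : ℕ) : ℝ) := by exact_mod_cast h
    _ = _ := by push_cast; ring

open ZMod in
lemma parseval (N : ℕ) [NeZero N] (kk : Lat N → ℝ) :
    ∑ w : Lat N, (kHat N kk (latRep2 N w))^2 ≤ 4 * (N:ℝ)^2 * ∑ z, (kk z)^2 := by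
  classical
  let ψ : AddChar (ZMod (2*N)) ℂ := stdAddChar
  let e : Lat N → Lat N → ℂ := fun w z => ψ (w.1 * z.1) * ψ (w.2 * z.2)
  have hN : (N:ℂ) ≠ 0 := by exact_mod_cast NeZero.ne N
  have he : ∀ w z : Lat N, e w z = Complex.exp (((Real.pi * (((latRep2 N w).1 : ℝ) * (latRep N z.1 : ℝ) / N +
      ((latRep2 N w).2 : ℝ) * (latRep N z.2 : ℝ) / N) : ℝ) : ℂ) * Complex.I) := by
    intro w z
    have h1 : w.1 * z.1 = ((latRep N w.1 * latRep N z.1 : ℤ) : ZMod (2*N)) := by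
      push_cast; rw [latRep_cast, latRep_cast]
    have h2 : w.2 * z.2 = ((latRep N w.2 * latRep N z.2 : ℤ) : ZMod (2*N)) := by
      push_cast; rw [latRep_cast, latRep_cast]
    simp only [e, ψ]
    rw [h1, h2, stdAddChar_coe, stdAddChar_coe, ← Complex.exp_add]
    congr 1
    simp only [latRep2]
    push_cast
    field_simp
  have hre : ∀ w : Lat N, kHat N kk (latRep2 N w) = (∑ z, (kk z : ℂ) * e w z).re := by
    intro w
    rw [Complex.re_sum]
    refine Finset.sum_congr rfl fun z _ => ?_
    rw [he, Complex.re_ofReal_mul, Complex.exp_ofReal_mul_I_re]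
  have hconj : ∀ w z, (starRingEnd ℂ) (e w z) = e w (-z) := by
    intro w z
    simp only [e, map_mul, Prod.fst_neg, Prod.snd_neg, mul_neg, AddChar.map_neg_eq_conj]
  have hadd : ∀ w z z', e w z * e w z' = e w (z + z') := by
    intro w z z'
    simp only [e, Prod.fst_add, Prod.snd_add, mul_add, AddChar.map_add_eq_mul]; ring
  have horth : ∀ z : Lat N, ∑ w, e w z = if z = 0 then 4 * (N:ℂ)^2 else 0 := by
    intro z
    simp only [e]
    rw [Fintype.sum_prod_type]
    simp_rw [← Finset.mul_sum]
    rw [← Finset.sum_mul]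
    rw [AddChar.sum_mulShift _ (isPrimitive_stdAddChar (2*N)), AddChar.sum_mulShift _ (isPrimitive_stdAddChar (2*N))]
    rw [ZMod.card]
    by_cases h1 : z.1 = 0 <;> by_cases h2 : z.2 = 0 <;> simp [h1, h2, Prod.ext_iff]
    ring
  have hsum : ∑ w : Lat N, (Complex.normSq (∑ z, (kk z : ℂ) * e w z) : ℂ) =
      4 * (N:ℂ)^2 * ∑ z, (kk z : ℂ)^2 := by
    have h1 : ∀ w, (Complex.normSq (∑ z, (kk z : ℂ) * e w z) : ℂ) =
        ∑ z, ∑ z', (kk z : ℂ) * (kk z' : ℂ) * e w (z - z') := by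
      intro w
      rw [← Complex.mul_conj, map_sum, Finset.sum_mul_sum]
      refine Finset.sum_congr rfl fun z _ => Finset.sum_congr rfl fun z' _ => ?_
      rw [map_mul, Complex.conj_ofReal, hconj, sub_eq_add_neg, ← hadd]; ring
    simp_rw [h1]
    rw [Finset.sum_comm, Finset.mul_sum]
    refine Finset.sum_congr rfl fun z _ => ?_
    rw [Finset.sum_comm]
    simp_rw [← Finset.mul_sum, horth, sub_eq_zero]
    simp
    ring
  have hsum' : ∑ w : Lat N, Complex.normSq (∑ z, (kk z : ℂ) * e w z) =
      4 * (N:ℝ)^2 * ∑ z, (kk z)^2 := by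
    exact_mod_cast hsum
  rw [← hsum']
  refine Finset.sum_le_sum fun w _ => ?_
  rw [hre, Complex.normSq_apply]
  nlinarith [mul_self_nonneg (∑ z, (kk z : ℂ) * e w z).im]

lemma cos_pair (a b : ℝ) :
    1 - Real.cos (a - b) ≤ 2 * (1 - Real.cos a) + 2 * (1 - Real.cos b) := by
  rw [Real.cos_sub]
  nlinarith [Real.sin_sq_add_cos_sq a, Real.sin_sq_add_cos_sq b, sq_nonneg (Real.sin a + Real.sin b),
    sq_nonneg (Real.cos a + Real.cos b - 2)]

lemma trig_sum_aux (θ φ : ℝ) (M m : ℕ) (hm : m ≤ M) :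
    (M:ℝ)/4 * (1 - Real.cos (m * θ)) ≤ ∑ i ∈ Finset.range (2*M), (1 - Real.cos (θ * i + φ)) := by
  have hnn : ∀ i : ℕ, 0 ≤ 1 - Real.cos (θ * i + φ) := fun i => by linarith [Real.cos_le_one (θ * i + φ)]
  have h1 : ∑ i ∈ Finset.range M, (1 - Real.cos (θ * i + φ)) ≤
      ∑ i ∈ Finset.range (2*M), (1 - Real.cos (θ * i + φ)) :=
    Finset.sum_le_sum_of_subset_of_nonneg (Finset.range_mono (by omega)) fun i _ _ => hnn i
  have h2 : ∑ i ∈ Finset.range M, (1 - Real.cos (θ * (i+m:ℕ) + φ)) ≤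
      ∑ i ∈ Finset.range (2*M), (1 - Real.cos (θ * i + φ)) := by
    have : ∑ i ∈ Finset.range M, (1 - Real.cos (θ * (i+m:ℕ) + φ)) =
      ∑ i ∈ (Finset.range M).map (addRightEmbedding m), (1 - Real.cos (θ * i + φ)) := by
      rw [Finset.sum_map]; rfl
    rw [this]
    refine Finset.sum_le_sum_of_subset_of_nonneg ?_ fun i _ _ => hnn i
    intro i hi
    simp only [Finset.mem_map, Finset.mem_range, addRightEmbedding_apply] at hi ⊢
    omega
  have h3 : ∑ i ∈ Finset.range M, (1 - Real.cos (m * θ)) ≤ ∑ i ∈ Finset.range M,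
      (2 * (1 - Real.cos (θ * (i+m:ℕ) + φ)) + 2 * (1 - Real.cos (θ * i + φ))) := by
    refine Finset.sum_le_sum fun i _ => ?_
    refine le_trans (le_of_eq ?_) (cos_pair _ _)
    congr 2
    push_cast; ring
  rw [Finset.sum_add_distrib, ← Finset.mul_sum, ← Finset.mul_sum, Finset.sum_const, Finset.card_range,
    nsmul_eq_mul] at h3
  linarith

lemma trig_sum (θ φ : ℝ) (M : ℕ) (hθ : |θ| ≤ Real.pi) :
    (M:ℝ)/20 * (min 1 (M * |θ|))^2 ≤ ∑ i ∈ Finset.range (2*M), (1 - Real.cos (θ * i + φ)) := by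
  have hpi := Real.pi_pos
  have hpi2 : Real.pi^2 ≤ 10 := by nlinarith [Real.pi_lt_d2]
  have hmin0 : 0 ≤ min 1 (M * |θ|) := le_min zero_le_one (by positivity)
  suffices h : ∃ m : ℕ, m ≤ M ∧ (min 1 (M * |θ|))^2 / 5 ≤ 1 - Real.cos (m * θ) by
    obtain ⟨m, hm, h⟩ := h
    refine le_trans ?_ (trig_sum_aux θ φ M m hm)
    have : (M:ℝ)/4 * ((min 1 (M * |θ|))^2 / 5) ≤ (M:ℝ)/4 * (1 - Real.cos (m * θ)) := by gcongr
    linarith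
  have hcos : ∀ x : ℝ, |x| ≤ Real.pi → x^2/5 ≤ 1 - Real.cos x := by
    intro x hx
    have h1 := Real.cos_le_one_sub_mul_cos_sq hx
    have h2 : (1:ℝ)/5 ≤ 2 / Real.pi^2 := by
      rw [div_le_div_iff₀ (by norm_num) (by positivity)]; linarith
    nlinarith [sq_nonneg x]
  rcases le_total (M * |θ|) Real.pi with h | h
  · refine ⟨M, le_rfl, ?_⟩
    refine le_trans ?_ (hcos _ (by rw [abs_mul, Nat.abs_cast]; exact h))
    have : ((M:ℝ) * θ)^2 = (M * |θ|)^2 := by rw [mul_pow, mul_pow, sq_abs]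
    rw [this]
    gcongr
    exact min_le_right _ _
  · have hθ0 : 0 < |θ| := by
      rcases (abs_nonneg θ).eq_or_lt with h0 | h0
      · rw [← h0] at h; linarith
      · exact h0
    set m := ⌊Real.pi / |θ|⌋₊ with hm
    have h1 : 1 ≤ Real.pi / |θ| := by rwa [le_div_iff₀ hθ0, one_mul]
    have hm1 : (m:ℝ) ≤ Real.pi / |θ| := Nat.floor_le (by positivity)
    have hm2 : Real.pi / |θ| < m + 1 := Nat.lt_floor_add_one _
    have hm3 : 1 ≤ m := Nat.one_le_floor_iff _ |>.2 h1
    have hm3' : (1:ℝ) ≤ m := by exact_mod_cast hm3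
    have hm4 : m * |θ| ≤ Real.pi := by rwa [le_div_iff₀ hθ0] at hm1
    have hm5 : Real.pi ≤ 2 * (m * |θ|) := by
      rw [div_lt_iff₀ hθ0] at hm2
      nlinarith
    refine ⟨m, ?_, ?_⟩
    · have : (m:ℝ) ≤ M := hm1.trans (by rwa [div_le_iff₀ hθ0])
      exact_mod_cast this
    · refine le_trans ?_ (hcos _ (by rw [abs_mul, Nat.abs_cast]; exact hm4))
      have : ((m:ℝ) * θ)^2 = (m * |θ|)^2 := by rw [mul_pow, mul_pow, sq_abs]
      rw [this]
      gcongr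
      refine (min_le_left _ _).trans ?_
      linarith [Real.pi_gt_three]

lemma profile_box (𝔎 : KacProfile) : ∃ (u : ℝ × ℝ) (δ r : ℝ), 0 < δ ∧ 0 < r ∧
    ∀ x : ℝ × ℝ, |x.1 - u.1| ≤ r → |x.2 - u.2| ≤ r → δ ≤ 𝔎.f x ∧ x ≠ 0 := by
  obtain ⟨x0, hx0⟩ := 𝔎.nontriv
  have hpos : 0 < 𝔎.f x0 := lt_of_le_of_ne (𝔎.mem x0).1 (Ne.symm hx0)
  have hopen : IsOpen {x | 𝔎.f x0 / 2 < 𝔎.f x} := isOpen_lt continuous_const 𝔎.smooth.continuous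
  obtain ⟨u, hu⟩ := (dense_compl_singleton (0 : ℝ × ℝ)).inter_open_nonempty _ hopen
    ⟨x0, by simp only [Set.mem_ofPred_eq]; linarith⟩
  have hopen2 : IsOpen ({x | 𝔎.f x0 / 2 < 𝔎.f x} ∩ {(0 : ℝ × ℝ)}ᶜ) :=
    hopen.inter isOpen_compl_singleton
  obtain ⟨r, hr, hball⟩ := Metric.isOpen_iff.1 hopen2 u hu
  refine ⟨u, 𝔎.f x0 / 2, r/2, by positivity, by positivity, ?_⟩
  intro x h1 h2
  have hx : x ∈ Metric.ball u r := by
    rw [Metric.mem_ball, Prod.dist_eq, Real.dist_eq, Real.dist_eq]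
    exact lt_of_le_of_lt (max_le h1 h2) (by linarith)
  have := hball hx
  exact ⟨le_of_lt this.1, this.2⟩

lemma gam_pos (N : ℕ) [NeZero N] : 0 < gam N := by
  have : (0:ℝ) < N := by exact_mod_cast Nat.pos_of_ne_zero (NeZero.ne N)
  unfold gam; positivity

lemma gam_sq (N : ℕ) [NeZero N] : (gam N)^2 = (N:ℝ)⁻¹ := by
  unfold gam; rw [Real.sq_sqrt (by positivity)]

lemma gam_sq_mul (N : ℕ) [NeZero N] : (N:ℝ) * (gam N)^2 = 1 := by
  rw [gam_sq]; exact mul_inv_cancel₀ (by exact_mod_cast NeZero.ne N)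

lemma supp_coord (𝔎 : KacProfile) (x : ℝ × ℝ) (h : 𝔎.f x ≠ 0) : |x.1| ≤ 3 ∧ |x.2| ≤ 3 := by
  have h1 : enorm2 x ≤ 3 := by
    by_contra hc
    exact h (𝔎.supp x (not_le.1 hc))
  unfold enorm2 at h1
  have h2 : x.1^2 + x.2^2 ≤ 3^2 := (Real.sqrt_le_left (by norm_num)).1 h1
  constructor <;> apply abs_le_of_sq_le_sq _ (by norm_num) <;> nlinarith [sq_nonneg x.1, sq_nonneg x.2]

lemma kGamma_nonneg (𝔎 : KacProfile) (N : ℕ) (c γ : ℝ) (hc : 0 < c) (z : Lat N) :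
    0 ≤ kGamma 𝔎 N c γ z := by
  unfold kGamma
  split_ifs
  · exact le_rfl
  · exact mul_nonneg (by positivity) (𝔎.mem _).1

lemma kGamma_le (𝔎 : KacProfile) (N : ℕ) (c γ : ℝ) (hc : 0 < c) (z : Lat N) :
    kGamma 𝔎 N c γ z ≤ c * γ^2 := by
  unfold kGamma
  split_ifs
  · positivity
  · exact mul_le_of_le_one_right (by positivity) (𝔎.mem _).2

lemma kGamma_even (𝔎 : KacProfile) (N : ℕ) [NeZero N] (c γ : ℝ) (z : Lat N) :
    kGamma 𝔎 N c γ (-z) = kGamma 𝔎 N c γ z := by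
  unfold kGamma
  simp only [neg_eq_zero]
  split_ifs
  · rfl
  · congr 1
    apply 𝔎.radial
    unfold enorm2
    have h : ∀ v : ZMod (2*N), (latRep N (-v) : ℝ)^2 = (latRep N v : ℝ)^2 := by
      intro v
      have := latRep_abs_neg N v
      rw [← sq_eq_sq_iff_abs_eq_abs] at this
      exact_mod_cast this
    simp only [mul_pow, Prod.fst_neg, Prod.snd_neg, h]

/-- Lower bound for sums against the Kac kernel. -/
lemma kernel_lower (𝔎 : KacProfile) (u : ℝ × ℝ) (δ r : ℝ) (hδ : 0 < δ) (hr : 0 < r)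
    (hbox : ∀ x : ℝ × ℝ, |x.1 - u.1| ≤ r → |x.2 - u.2| ≤ r → δ ≤ 𝔎.f x ∧ x ≠ 0)
    (N : ℕ) [NeZero N] (hγ4 : gam N ≤ 1/4) (hγr : gam N ≤ r/4) :
    ∃ (a b : ℤ) (M : ℕ), r / (4 * gam N) ≤ M ∧ ∀ c : ℝ, 0 < c → ∀ g : ℤ × ℤ → ℝ, (∀ w, 0 ≤ g w) →
      c * (gam N)^2 * δ * ∑ i ∈ Finset.range (2*M), ∑ j ∈ Finset.range (2*M), g (a + i, b + j) ≤
        ∑ z : Lat N, kGamma 𝔎 N c (gam N) z * g (latRep2 N z) := by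
  have hγ := gam_pos N
  have hNγ := gam_sq_mul N
  set γ := gam N with hγdef
  refine ⟨⌈(u.1 - r)/γ⌉, ⌈(u.2 - r)/γ⌉, ⌊r/(2*γ)⌋₊, ?_, ?_⟩
  · have h1 := Nat.lt_floor_add_one (r/(2*γ))
    have h2 : r/(2*γ) = 2 * (r/(4*γ)) := by field_simp; norm_num
    have h3 : 1 ≤ r/(4*γ) := by rw [le_div_iff₀ (by positivity)]; linarith
    linarith
  intro c hc g hg
  set M := ⌊r/(2*γ)⌋₊ with hM
  have hM1 : 2 * M * γ ≤ r := by
    have h1 : (M:ℝ) ≤ r/(2*γ) := Nat.floor_le (by positivity)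
    rw [le_div_iff₀ (by positivity)] at h1
    linarith
  have key : ∀ v : ℝ, ∀ i : ℕ, i < 2*M → |γ * ((⌈(v - r)/γ⌉ + i : ℤ) : ℝ) - v| ≤ r := by
    intro v i hi
    have h1 := Int.le_ceil ((v-r)/γ)
    have h2 := Int.ceil_lt_add_one ((v-r)/γ)
    rw [div_le_iff₀ hγ] at h1
    have h3 : (⌈(v - r)/γ⌉:ℝ) * γ < v - r + γ := by
      have := mul_lt_mul_of_pos_right h2 hγ
      rwa [add_mul, div_mul_cancel₀ _ hγ.ne', one_mul] at this
    have h4 : (i:ℝ) ≤ 2*M := by exact_mod_cast hi.le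
    have h5 : (i:ℝ) * γ ≤ 2*M*γ := by gcongr
    have h6 : 0 ≤ (i:ℝ) * γ := by positivity
    push_cast
    rw [abs_le]
    constructor <;> nlinarith
  set a := ⌈(u.1 - r)/γ⌉
  set b := ⌈(u.2 - r)/γ⌉
  have hsmall : ∀ n : ℤ, |γ * (n:ℝ)| ≤ 3 → |n| < (N:ℤ) := by
    intro n hn
    rw [abs_mul, abs_of_pos hγ] at hn
    have : ((|n| : ℤ) : ℝ) < (N:ℝ) := by
      push_cast
      by_contra hc
      rw [not_lt] at hc
      have h1 : γ * N ≤ 3 := le_trans (by gcongr) hn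
      nlinarith
    exact_mod_cast this
  have hf : ∀ p ∈ Finset.range (2*M) ×ˢ Finset.range (2*M),
      δ ≤ 𝔎.f (γ * ((a + (p.1:ℕ) : ℤ):ℝ), γ * ((b + (p.2:ℕ) : ℤ):ℝ)) ∧
      ((γ * ((a + (p.1:ℕ) : ℤ):ℝ), γ * ((b + (p.2:ℕ) : ℤ):ℝ)) : ℝ × ℝ) ≠ 0 := by
    intro p hp
    rw [Finset.mem_product, Finset.mem_range, Finset.mem_range] at hp
    exact hbox _ (key u.1 p.1 hp.1) (key u.2 p.2 hp.2)
  let φ : ℕ × ℕ → Lat N := fun p => (((a + (p.1:ℕ) : ℤ) : ZMod (2*N)), ((b + (p.2:ℕ) : ℤ) : ZMod (2*N)))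
  have hrep : ∀ p ∈ Finset.range (2*M) ×ˢ Finset.range (2*M), latRep2 N (φ p) = (a + p.1, b + p.2) := by
    intro p hp
    have h1 := (hf p hp).1
    have h2 := supp_coord 𝔎 _ (by linarith : 𝔎.f (γ * ((a + (p.1:ℕ) : ℤ):ℝ), γ * ((b + (p.2:ℕ) : ℤ):ℝ)) > 0).ne'
    simp only [latRep2, φ]
    rw [latRep_intCast N _ (hsmall _ h2.1), latRep_intCast N _ (hsmall _ h2.2)]
  have hinj : Set.InjOn φ (Finset.range (2*M) ×ˢ Finset.range (2*M) : Finset (ℕ × ℕ)) := by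
    intro p hp q hq h
    have h1 := hrep p hp
    rw [h, hrep q hq, Prod.mk.injEq] at h1
    apply Prod.ext <;> omega
  rw [← Finset.sum_product', Finset.mul_sum]
  calc ∑ p ∈ Finset.range (2*M) ×ˢ Finset.range (2*M), c * γ^2 * δ * g (a + p.1, b + p.2)
      ≤ ∑ p ∈ Finset.range (2*M) ×ˢ Finset.range (2*M), kGamma 𝔎 N c γ (φ p) * g (latRep2 N (φ p)) := by
        refine Finset.sum_le_sum fun p hp => ?_
        rw [hrep p hp]
        refine mul_le_mul_of_nonneg_right ?_ (hg _)
        have hr1 : latRep N (φ p).1 = a + p.1 := congrArg Prod.fst (hrep p hp)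
        have hr2 : latRep N (φ p).2 = b + p.2 := congrArg Prod.snd (hrep p hp)
        have hne : φ p ≠ 0 := by
          intro h0
          apply (hf p hp).2
          rw [h0] at hr1 hr2
          simp only [Prod.fst_zero, Prod.snd_zero, latRep_zero] at hr1 hr2
          rw [← hr1, ← hr2]; simp
        unfold kGamma
        rw [if_neg hne, hr1, hr2]
        exact mul_le_mul_of_nonneg_left (hf p hp).1 (by positivity)
    _ = ∑ z ∈ (Finset.range (2*M) ×ˢ Finset.range (2*M)).image φ, kGamma 𝔎 N c γ z * g (latRep2 N z) :=
        (Finset.sum_image (f := fun z => kGamma 𝔎 N c γ z * g (latRep2 N z)) hinj).symm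
    _ ≤ _ := Finset.sum_le_sum_of_subset_of_nonneg (Finset.subset_univ _) fun z _ _ =>
        mul_nonneg (kGamma_nonneg 𝔎 N c γ hc z) (hg _)

lemma c_lower (𝔎 : KacProfile) (N : ℕ) [NeZero N] (hγ4 : gam N ≤ 1/4) (c : ℝ) (hc : 0 < c)
    (hsum : ∑ z : Lat N, kGamma 𝔎 N c (gam N) z = 1) : 1/49 ≤ c := by
  have hγ := gam_pos N
  set γ := gam N
  set R := ⌊3/γ⌋₊ with hR
  have h1 : ∑ z : Lat N, kGamma 𝔎 N c γ z ≤
      ∑ z ∈ Finset.univ.filter (fun z : Lat N => |latRep N z.1| ≤ R ∧ |latRep N z.2| ≤ R), c * γ^2 := by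
    rw [Finset.sum_filter]
    refine Finset.sum_le_sum fun z _ => ?_
    split_ifs with h
    · exact kGamma_le 𝔎 N c γ hc z
    · unfold kGamma
      split_ifs with h0
      · exact le_rfl
      · have : 𝔎.f (γ * (latRep N z.1 : ℝ), γ * (latRep N z.2 : ℝ)) = 0 := by
          by_contra hne
          apply h
          have h3 := supp_coord 𝔎 _ hne
          have hh : ∀ n : ℤ, |γ * (n:ℝ)| ≤ 3 → |n| ≤ (R:ℤ) := by
            intro n hn
            rw [abs_mul, abs_of_pos hγ, ← le_div_iff₀' hγ] at hn
            have : n.natAbs ≤ R := by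
              apply Nat.le_floor
              rw [Nat.cast_natAbs]; push_cast; exact hn
            rw [Int.abs_eq_natAbs]
            exact_mod_cast this
          exact ⟨hh _ h3.1, hh _ h3.2⟩
        rw [this, mul_zero]
  rw [hsum, Finset.sum_const, nsmul_eq_mul] at h1
  have h2 := count_box N R
  have h3 : (R:ℝ) ≤ 3/γ := Nat.floor_le (by positivity)
  rw [le_div_iff₀ hγ] at h3
  have h4 : 1 ≤ (2*(R:ℝ)+1)^2 * (c*γ^2) := h1.trans (by gcongr)
  have h5 : ((2*(R:ℝ)+1)*γ)^2 ≤ 7^2 := by gcongr; linarith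
  nlinarith

lemma one_sub_kHat (N : ℕ) [NeZero N] (kk : Lat N → ℝ) (hsum : ∑ z : Lat N, kk z = 1) (ω : ℤ × ℤ) :
    1 - kHat N kk ω = ∑ z : Lat N, kk z * (fun w : ℤ × ℤ => 1 - Real.cos (Real.pi *
      ((ω.1 : ℝ) * (w.1 : ℝ) / N + (ω.2 : ℝ) * (w.2 : ℝ) / N))) (latRep2 N z) := by
  unfold kHat
  simp only [mul_sub, mul_one, Finset.sum_sub_distrib, hsum, latRep2]

/-- Uniform constants attached to the kernel. -/
lemma kernel_consts (𝔎 : KacProfile) : ∃ (γ₁ C₁ d e : ℝ), 0 < γ₁ ∧ 0 < C₁ ∧ 0 < d ∧ 0 < e ∧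
    γ₁ ≤ 1/4 ∧
    ∀ (N : ℕ) [NeZero N], gam N ≤ γ₁ → ∀ c : ℝ, 0 < c → (∑ z : Lat N, kGamma 𝔎 N c (gam N) z) = 1 →
      c ≤ C₁ ∧ ∀ z : Lat N,
        d * (min 1 (e * gam N * |(latRep N z.1 : ℝ)|))^2 ≤ 1 - kHat N (kGamma 𝔎 N c (gam N)) (latRep2 N z) ∧
        d * (min 1 (e * gam N * |(latRep N z.2 : ℝ)|))^2 ≤ 1 - kHat N (kGamma 𝔎 N c (gam N)) (latRep2 N z) := by
  obtain ⟨u, δ, r, hδ, hr, hbox⟩ := profile_box 𝔎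
  refine ⟨min (1/4) (r/4), 4/(δ*r^2), δ*r^2/7840, r/4, by positivity, by positivity, by positivity,
    by positivity, min_le_left _ _, ?_⟩
  intro N _ hγ1 c hc hsum
  have hγ4 := hγ1.trans (min_le_left _ _)
  have hγr := hγ1.trans (min_le_right _ _)
  obtain ⟨a, b, M, hM, hlow⟩ := kernel_lower 𝔎 u δ r hδ hr hbox N hγ4 hγr
  have hc49 := c_lower 𝔎 N hγ4 c hc hsum
  have hγ := gam_pos N
  have hNγ := gam_sq_mul N
  set γ := gam N
  have hN : (0:ℝ) < N := by exact_mod_cast Nat.pos_of_ne_zero (NeZero.ne N)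
  have hMγ : r/4 ≤ M * γ := by
    have : r/4 = r/(4*γ) * γ := by field_simp
    rw [this]; gcongr
  have hMγ2 : (r/4)^2 ≤ (M * γ)^2 := by gcongr
  refine ⟨?_, ?_⟩
  · have h1 := hlow c hc (fun _ => 1) (fun _ => zero_le_one)
    simp only [mul_one, Finset.sum_const, Finset.card_range, nsmul_eq_mul, hsum] at h1
    push_cast at h1
    rw [le_div_iff₀ (by positivity)]
    have h2 : c * δ * (r/4)^2 ≤ c * δ * (M*γ)^2 := by gcongr
    nlinarith
  intro z
  have hπ := Real.pi_pos
  have hθ : ∀ v : ZMod (2*N), |Real.pi * (latRep N v : ℝ) / N| ≤ Real.pi := by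
    intro v
    have h1 : |(latRep N v : ℝ)| ≤ N := by exact_mod_cast latRep_abs_le N v
    rw [abs_div, abs_mul, abs_of_pos hπ, abs_of_pos hN, div_le_iff₀ hN]
    gcongr
  have hmin : ∀ v : ZMod (2*N), min 1 (r/4 * γ * |(latRep N v : ℝ)|) ≤
      min 1 (M * |Real.pi * (latRep N v : ℝ) / N|) := by
    intro v
    refine min_le_min le_rfl ?_
    rw [abs_div, abs_mul, abs_of_pos hπ, abs_of_pos hN]
    have h1 : (M:ℝ) * (Real.pi * |(latRep N v : ℝ)| / N) = Real.pi * (M * γ * γ * |(latRep N v : ℝ)|) := by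
      have : (N:ℝ)⁻¹ = γ * γ := by rw [← sq]; exact (gam_sq N).symm
      rw [div_eq_mul_inv, this]; ring
    rw [h1]
    have h2 : r/4 * γ * |(latRep N v : ℝ)| ≤ M * γ * γ * |(latRep N v : ℝ)| := by gcongr
    have h3 : 0 ≤ M * γ * γ * |(latRep N v : ℝ)| := by positivity
    nlinarith [Real.pi_gt_three]
  have hconst : ∀ t : ℝ, 0 ≤ t → δ*r^2/7840 * t ≤ c * γ^2 * δ * ((2*M:ℕ) * ((M:ℝ)/20 * t)) := by
    intro t ht
    have h1 : 1/49 * (r/4)^2 * (δ/10 * t) ≤ c * (M*γ)^2 * (δ/10*t) := by gcongr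
    push_cast
    nlinarith
  have hg : ∀ w : ℤ × ℤ, 0 ≤ (fun w : ℤ × ℤ => 1 - Real.cos (Real.pi *
      (((latRep2 N z).1 : ℝ) * (w.1 : ℝ) / N + ((latRep2 N z).2 : ℝ) * (w.2 : ℝ) / N))) w := fun w => by
    simp only [sub_nonneg]; exact Real.cos_le_one _
  have hm0 : ∀ x : ℝ, 0 ≤ x → 0 ≤ min 1 x := fun x hx => le_min zero_le_one hx
  constructor
  · rw [one_sub_kHat N _ hsum]
    refine le_trans ?_ (hlow c hc _ hg)
    refine le_trans (hconst _ (sq_nonneg _)) ?_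
    refine mul_le_mul_of_nonneg_left ?_ (by positivity)
    rw [Finset.sum_comm, ← nsmul_eq_mul, ← Finset.card_range (2*M), ← Finset.sum_const, Finset.card_range]
    refine Finset.sum_le_sum fun j _ => ?_
    refine le_trans ?_ (le_trans (trig_sum (Real.pi * (latRep N z.1 : ℝ) / N)
      (Real.pi * ((latRep N z.1 : ℝ) * a / N + (latRep N z.2 : ℝ) * (b + j) / N)) M (hθ z.1)) (le_of_eq ?_))
    · have h2 := hmin z.1
      have h3 := hm0 (r/4 * γ * |(latRep N z.1 : ℝ)|) (by positivity)
      gcongr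
    · refine Finset.sum_congr rfl fun i _ => ?_
      simp only [latRep2]
      push_cast
      congr 2; ring
  · rw [one_sub_kHat N _ hsum]
    refine le_trans ?_ (hlow c hc _ hg)
    refine le_trans (hconst _ (sq_nonneg _)) ?_
    refine mul_le_mul_of_nonneg_left ?_ (by positivity)
    rw [← nsmul_eq_mul, ← Finset.card_range (2*M), ← Finset.sum_const, Finset.card_range]
    refine Finset.sum_le_sum fun j _ => ?_
    refine le_trans ?_ (le_trans (trig_sum (Real.pi * (latRep N z.2 : ℝ) / N)
      (Real.pi * ((latRep N z.1 : ℝ) * (a + j) / N + (latRep N z.2 : ℝ) * b / N)) M (hθ z.2)) (le_of_eq ?_))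
    · have h2 := hmin z.2
      have h3 := hm0 (r/4 * γ * |(latRep N z.2 : ℝ)|) (by positivity)
      gcongr
    · refine Finset.sum_congr rfl fun i _ => ?_
      simp only [latRep2]
      push_cast
      congr 2; ring

lemma abs_kHat_le (N : ℕ) [NeZero N] (kk : Lat N → ℝ) (hk : ∀ z, 0 ≤ kk z)
    (hsum : ∑ z : Lat N, kk z = 1) (ω : ℤ × ℤ) : |kHat N kk ω| ≤ 1 := by
  unfold kHat
  refine (Finset.abs_sum_le_sum_abs _ _).trans ?_
  rw [← hsum]
  refine Finset.sum_le_sum fun z _ => ?_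
  rw [abs_mul, abs_of_nonneg (hk z)]
  exact mul_le_of_le_one_right (hk z) (Real.abs_cos_le_one _)

lemma cGamma_nonneg (N : ℕ) [NeZero N] (kk : Lat N → ℝ) (γ : ℝ) (hk : ∀ z, 0 ≤ kk z)
    (hsum : ∑ z : Lat N, kk z = 1) : 0 ≤ cGamma N kk γ := by
  unfold cGamma
  refine mul_nonneg (by norm_num) (Finset.sum_nonneg fun z _ => ?_)
  split_ifs
  · exact le_rfl
  · have := (abs_le.1 (abs_kHat_le N kk hk hsum (latRep2 N z))).2
    exact div_nonneg (sq_nonneg _) (mul_nonneg (by positivity) (by linarith))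

lemma cGamma_bound (𝔎 : KacProfile) : ∃ (γ₂ C₂ : ℝ), 0 < γ₂ ∧ 0 < C₂ ∧ γ₂ ≤ 1/4 ∧
    ∀ (N : ℕ) [NeZero N], gam N ≤ γ₂ → ∀ c : ℝ, 0 < c → (∑ z : Lat N, kGamma 𝔎 N c (gam N) z) = 1 →
      c ≤ C₂ ∧ cGamma N (kGamma 𝔎 N c (gam N)) (gam N) * gam N ≤ C₂ := by
  obtain ⟨γ₁, C₁, d, e, hγ₁, hC₁, hd, he, hγ₁4, hmain⟩ := kernel_consts 𝔎
  refine ⟨min γ₁ (min d (1/e)), C₁ + 1/4 * (1/(d*e^2) * (8/(d*e^2) + 2)), by positivity, by positivity,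
    (min_le_left _ _).trans hγ₁4, ?_⟩
  intro N _ hγN c hc hsum
  obtain ⟨hcC, hlow⟩ := hmain N (hγN.trans (min_le_left _ _)) c hc hsum
  refine ⟨hcC.trans (by linarith [show 0 < 1/4 * (1/(d*e^2) * (8/(d*e^2) + 2)) by positivity]), ?_⟩
  have hγd := hγN.trans ((min_le_right _ _).trans (min_le_left _ _))
  have hγe := hγN.trans ((min_le_right _ _).trans (min_le_right _ _))
  have hγ4 := (hγN.trans (min_le_left _ _)).trans hγ₁4
  have hγ := gam_pos N
  have hNγ := gam_sq_mul N
  have hk0 := kGamma_nonneg 𝔎 N c (gam N) hc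
  have hkle := kGamma_le 𝔎 N c (gam N) hc
  set γ := gam N
  set kk := kGamma 𝔎 N c γ
  rw [le_div_iff₀ he] at hγe
  set q := d * e^2 with hq
  have hq0 : 0 < q := by positivity
  set R := ⌊Real.sqrt (1/(q*γ))⌋₊ with hR
  have hR2 : (R:ℝ)^2 ≤ 1/(q*γ) := by
    have h1 : (R:ℝ) ≤ Real.sqrt (1/(q*γ)) := Nat.floor_le (by positivity)
    calc (R:ℝ)^2 ≤ (Real.sqrt (1/(q*γ)))^2 := by gcongr
      _ = _ := Real.sq_sqrt (by positivity)
  -- small frequencies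
  have hsmall : ∀ n : ℤ, d * (min 1 (e * γ * |(n : ℝ)|))^2 < γ → |n| ≤ (R:ℤ) := by
    intro n hn
    have h1 : min 1 (e * γ * |(n : ℝ)|) = e * γ * |(n : ℝ)| := by
      apply min_eq_right
      by_contra hcon
      rw [min_eq_left (not_le.1 hcon).le] at hn
      linarith
    rw [h1] at hn
    have h2 : |(n:ℝ)|^2 ≤ 1/(q*γ) := by
      rw [le_div_iff₀ (by positivity)]
      have h3 : (|(n:ℝ)|^2 * (q*γ)) * γ ≤ 1 * γ := by rw [hq]; nlinarith
      exact le_of_mul_le_mul_right h3 hγ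
    have h4 : n.natAbs ≤ R := by
      apply Nat.le_floor
      rw [Nat.cast_natAbs]; push_cast
      exact Real.le_sqrt_of_sq_le h2
    rw [Int.abs_eq_natAbs]
    exact_mod_cast h4
  have hgap : ∀ n : ℤ, n ≠ 0 → q * γ^2 ≤ d * (min 1 (e * γ * |(n : ℝ)|))^2 := by
    intro n hn
    have h1 : (1:ℝ) ≤ |(n:ℝ)| := by
      have := Int.one_le_abs hn
      exact_mod_cast this
    have h2 : e * γ ≤ min 1 (e * γ * |(n : ℝ)|) := by
      apply le_min (by linarith)
      exact le_mul_of_one_le_right (by positivity) h1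
    have h3 : (e*γ)^2 ≤ (min 1 (e * γ * |(n : ℝ)|))^2 := by gcongr
    rw [hq]; nlinarith
  have hterm : ∀ z : Lat N, (if z = (0 : Lat N) then 0 else
    (kHat N kk (latRep2 N z))^2 / ((γ^2)⁻¹ * (1 - kHat N kk (latRep2 N z)))) ≤
      γ * (kHat N kk (latRep2 N z))^2 +
        (if |latRep N z.1| ≤ (R:ℤ) ∧ |latRep N z.2| ≤ (R:ℤ) then 1/q else 0) := by
    intro z
    have hpos : 0 ≤ (if |latRep N z.1| ≤ (R:ℤ) ∧ |latRep N z.2| ≤ (R:ℤ) then 1/q else 0) := by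
      split_ifs <;> positivity
    split_ifs with h0 h1 h1
    · positivity
    · positivity
    · -- in the small box
      have hgp : q * γ^2 ≤ 1 - kHat N kk (latRep2 N z) := by
        by_cases h2 : latRep N z.1 = 0
        · have h3 : latRep N z.2 ≠ 0 := by
            intro h3
            apply h0
            apply Prod.ext
            · exact latRep_inj N (by rw [h2]; exact (latRep_zero N).symm)
            · exact latRep_inj N (by rw [h3]; exact (latRep_zero N).symm)
          exact (hgap _ h3).trans (hlow z).2
        · exact (hgap _ h2).trans (hlow z).1
      have hsq : (kHat N kk (latRep2 N z))^2 ≤ 1 := by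
        rw [sq_le_one_iff_abs_le_one]; exact abs_kHat_le N kk hk0 hsum _
      have h5 : q ≤ (γ^2)⁻¹ * (1 - kHat N kk (latRep2 N z)) := by
        rw [inv_mul_eq_div, le_div_iff₀ (by positivity)]; exact hgp
      have h6 : (kHat N kk (latRep2 N z))^2 / ((γ^2)⁻¹ * (1 - kHat N kk (latRep2 N z))) ≤ 1/q := by
        gcongr
      have : 0 ≤ γ * (kHat N kk (latRep2 N z))^2 := by positivity
      linarith
    · have hbig : γ ≤ 1 - kHat N kk (latRep2 N z) := by
        by_contra hcon
        rw [not_le] at hcon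
        exact h1 ⟨hsmall _ ((hlow z).1.trans_lt hcon), hsmall _ ((hlow z).2.trans_lt hcon)⟩
      rw [add_zero, inv_mul_eq_div, div_div_eq_mul_div, div_le_iff₀ (by linarith)]
      have := mul_le_mul_of_nonneg_left hbig (show 0 ≤ γ * (kHat N kk (latRep2 N z))^2 by positivity)
      nlinarith
  have hsumk : ∑ z : Lat N, (kk z)^2 ≤ C₁ * γ^2 := by
    calc ∑ z : Lat N, (kk z)^2 ≤ ∑ z : Lat N, (C₁ * γ^2) * kk z := by
          refine Finset.sum_le_sum fun z _ => ?_
          rw [sq]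
          refine mul_le_mul_of_nonneg_right ((hkle z).trans ?_) (hk0 z)
          gcongr
      _ = _ := by rw [← Finset.mul_sum, hsum, mul_one]
  have hS : ∑ z : Lat N, (if z = (0 : Lat N) then 0 else
    (kHat N kk (latRep2 N z))^2 / ((γ^2)⁻¹ * (1 - kHat N kk (latRep2 N z)))) ≤
      γ * (4 * (N:ℝ)^2 * (C₁ * γ^2)) + (2*R+1)^2 * (1/q) := by
    refine (Finset.sum_le_sum fun z _ => hterm z).trans ?_
    rw [Finset.sum_add_distrib, ← Finset.mul_sum, ← Finset.sum_filter, Finset.sum_const, nsmul_eq_mul]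
    have h1 := (parseval N kk).trans (mul_le_mul_of_nonneg_left hsumk (by positivity))
    have h2 := count_box N R
    gcongr
  have hR3 : (2*(R:ℝ)+1)^2 * γ ≤ 8/q + 2 := by
    have h1 : (2*(R:ℝ)+1)^2 ≤ 8 * (R:ℝ)^2 + 2 := by nlinarith [sq_nonneg (2*(R:ℝ)-1)]
    have h2 : (R:ℝ)^2 * γ ≤ 1/q := by
      have : 1/q = 1/(q*γ) * γ := by field_simp
      rw [this]; gcongr
    have h3 : (2*(R:ℝ)+1)^2 * γ ≤ (8 * (R:ℝ)^2 + 2) * γ := by gcongr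
    have h4 : 8/q = 8 * (1/q) := by ring
    rw [h4]; nlinarith
  unfold cGamma
  calc _ ≤ 1/4 * (γ * (4 * (N:ℝ)^2 * (C₁ * γ^2)) + (2*R+1)^2 * (1/q)) * γ := by gcongr
    _ = C₁ * ((N:ℝ)*γ^2)^2 + 1/4 * (1/q * ((2*(R:ℝ)+1)^2 * γ)) := by ring
    _ ≤ _ := by
      rw [hNγ, one_pow, mul_one]
      gcongr

lemma gibbs_to_mom (N : ℕ) [NeZero N] (kk : Lat N → ℝ) (β γ : ℝ) (p : ℕ) (hp : Even p) :
    gibbsE N kk β 0 (fun σ => ∑ z : Lat N, ((N : ℝ)^2)⁻¹ * |fluct N kk γ σ z| ^ p) =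
      4 * (γ⁻¹)^p * (mom N kk β p / mom N kk β 0) := by
  have hN : (N:ℝ) ≠ 0 := by exact_mod_cast NeZero.ne N
  set Z := ∑ s : Lat N → Bool, gw N kk β s with hZ
  have hZ0 : 0 < Z := Finset.sum_pos (fun s _ => gw_pos kk β s) Finset.univ_nonempty
  have h0 : mom N kk β 0 = 4 * (N:ℝ)^2 * Z := by
    unfold mom
    simp only [pow_zero, Finset.sum_const, Finset.card_univ, Fintype.card_prod, ZMod.card, nsmul_eq_mul,
      mul_one]
    rw [← Finset.sum_mul, ← hZ]; push_cast; ring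
  have h1 : (∑ s : Lat N → Bool, Real.exp (hamil N kk β 0 (fun x => spin (s x))) *
      (∑ z : Lat N, ((N : ℝ)^2)⁻¹ * |fluct N kk γ (fun x => spin (s x)) z| ^ p)) =
      ((N : ℝ)^2)⁻¹ * (γ⁻¹)^p * mom N kk β p := by
    unfold mom
    simp only [Finset.mul_sum]
    refine Finset.sum_congr rfl fun s _ => Finset.sum_congr rfl fun x _ => ?_
    rw [hp.pow_abs]
    have : fluct N kk γ (fun x => spin (s x)) x = γ⁻¹ * hf N kk s x := rfl
    rw [this, mul_pow]
    unfold gw; ring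
  unfold gibbsE
  rw [h1, h0]
  change _ / Z = _
  field_simp

/-- a priori bound `E[‖X_γ‖_{L^p(Λ_ε)}^p] ≤ C γ^{-p/2}` for even `p ≥ 2`. -/
theorem statement4 (𝔎 : KacProfile) (A : ℝ) (p : ℕ) (hp : Even p) (hp2 : 2 ≤ p) :
    ∃ γ₀ : ℝ, 0 < γ₀ ∧ ∃ C : ℝ, 0 < C ∧ ∀ (N : ℕ) [NeZero N], gam N ≤ γ₀ →
      ∀ c : ℝ, 0 < c → (∑ z : Lat N, kGamma 𝔎 N c (gam N) z) = 1 →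
      gibbsE N (kGamma 𝔎 N c (gam N)) (betaCrit 𝔎 N c A) 0
        (fun σ => ∑ z : Lat N, ((N : ℝ)^2)⁻¹ *
          |fluct N (kGamma 𝔎 N c (gam N)) (gam N) σ z| ^ p)
      ≤ C * (gam N) ^ (-(p : ℝ)/2) := by
  obtain ⟨γ₂, C₂, hγ₂, hC₂, hγ₂4, hb⟩ := cGamma_bound 𝔎
  obtain ⟨k, hk⟩ := hp
  have hpk : p = 2*k := by omega
  set K := C₂ + |A| with hK
  have hK0 : 0 < K := by positivity
  obtain ⟨C, hC, hmom⟩ := mom_all K hK0 k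
  refine ⟨min γ₂ (1/K), by positivity, 4*C, by positivity, ?_⟩
  intro N _ hγN c hc hsum
  obtain ⟨hcC, hcg⟩ := hb N (hγN.trans (min_le_left _ _)) c hc hsum
  have hγ := gam_pos N
  have hγ4 := (hγN.trans (min_le_left _ _)).trans hγ₂4
  have hγK := hγN.trans (min_le_right _ _)
  have hk0 := kGamma_nonneg 𝔎 N c (gam N) hc
  have hcg0 := cGamma_nonneg N _ (gam N) hk0 hsum
  rw [gibbs_to_mom _ _ _ _ _ ⟨k, hk⟩]
  have hA0 := abs_nonneg A
  have hAγ : |A| * (gam N)^2 ≤ |A| * gam N := by gcongr; nlinarith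
  have hgood : GoodKernel N (kGamma 𝔎 N c (gam N)) (betaCrit 𝔎 N c A) (gam N) K := by
    refine ⟨by simp [kGamma], hk0, kGamma_even 𝔎 N c (gam N), hsum, ?_, ?_, ?_⟩
    · intro z
      refine (kGamma_le 𝔎 N c (gam N) hc z).trans ?_
      gcongr
      linarith
    · unfold betaCrit
      have e1 : (gam N)^2 * (cGamma N (kGamma 𝔎 N c (gam N)) (gam N)) ≤ C₂ * gam N := by
        nlinarith
      have e0 : 0 ≤ (gam N)^2 * (cGamma N (kGamma 𝔎 N c (gam N)) (gam N)) := by positivity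
      have e2 := (abs_le.1 (le_refl |A|)).1
      have e3 := (abs_le.1 (le_refl |A|)).2
      have e4 : (gam N)^2 * A ≤ |A| * (gam N)^2 := by nlinarith [sq_nonneg (gam N)]
      have e5 : -(|A| * (gam N)^2) ≤ (gam N)^2 * A := by nlinarith [sq_nonneg (gam N)]
      rw [abs_le, hK]
      constructor <;> nlinarith
    · rw [le_div_iff₀ hK0] at hγK; linarith
  have hm := hmom N _ _ _ hγ (by linarith) hgood
  rw [← hpk] at hm
  have hz : 0 < mom N (kGamma 𝔎 N c (gam N)) (betaCrit 𝔎 N c A) 0 := by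
    unfold mom
    refine Finset.sum_pos (fun s _ => mul_pos (gw_pos _ _ _) ?_) Finset.univ_nonempty
    exact Finset.sum_pos (fun x _ => by simp) Finset.univ_nonempty
  rw [← div_le_iff₀ hz] at hm
  have hpow : (gam N) ^ (-(p : ℝ)/2) = ((gam N)⁻¹)^p * (gam N)^k := by
    have : -(p:ℝ)/2 = -(k:ℝ) := by rw [hpk]; push_cast; ring
    rw [this, Real.rpow_neg hγ.le, Real.rpow_natCast, hpk, two_mul, pow_add, mul_assoc, ← mul_pow,
      inv_mul_cancel₀ hγ.ne', one_pow, mul_one, inv_pow]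
  rw [hpow]
  calc 4 * ((gam N)⁻¹)^p * (mom N (kGamma 𝔎 N c (gam N)) (betaCrit 𝔎 N c A) p /
        mom N (kGamma 𝔎 N c (gam N)) (betaCrit 𝔎 N c A) 0)
      ≤ 4 * ((gam N)⁻¹)^p * (C * (gam N)^k) := by gcongr
    _ = _ := by ring

end IsingKac
end
end

section
/- There exists a constant c₀ > 0 such that for all β ∈ [1,2] and all h ∈ [−1,1], one has h·tanh(βh) ≤ βh² − c₀h⁴ (equivalently, tanh(βh)/h ≤ β − c₀h² for h ≠ 0). -/
open scoped BigOperators ENNReal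
open MeasureTheory

noncomputable section

namespace IsingKac

open scoped NNReal

theorem tanh_cubic_bound (x : ℝ) (h0 : 0 ≤ x) (h2 : x ≤ 2) :
    Real.tanh x ≤ x - (1/30) * x^3 := by
  have hd : ∀ y : ℝ, HasDerivAt (fun y : ℝ => (y - (1/30) * y^3) * Real.cosh y - Real.sinh y)
      ((1 - (1/30) * (3 * y^2)) * Real.cosh y + (y - (1/30) * y^3) * Real.sinh y
        - Real.cosh y) y := by
    intro y
    have h3 : HasDerivAt (fun y : ℝ => y^3) (3 * y^2) y := by
      simpa using hasDerivAt_pow 3 y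
    exact (((hasDerivAt_id y).sub (h3.const_mul (1/30))).mul (Real.hasDerivAt_cosh y)).sub
      (Real.hasDerivAt_sinh y)
  have hm : MonotoneOn (fun y : ℝ => (y - (1/30) * y^3) * Real.cosh y - Real.sinh y)
      (Set.Icc 0 2) := by
    apply monotoneOn_of_deriv_nonneg (convex_Icc 0 2)
    · exact fun y _ => (hd y).continuousAt.continuousWithinAt
    · exact fun y _ => (hd y).differentiableAt.differentiableWithinAt
    · intro y hy
      rw [interior_Icc] at hy
      obtain ⟨hy0, hy2⟩ := hy
      rw [(hd y).deriv]
      have hs : y ≤ Real.sinh y := Real.self_le_sinh_iff.2 hy0.le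
      have hc : Real.cosh y ≤ 8 := by
        have e1 : Real.exp y ≤ Real.exp 1 * Real.exp 1 := by
          rw [← Real.exp_add]
          exact Real.exp_le_exp.2 (by linarith)
        have e2 : Real.exp (-y) ≤ 1 := Real.exp_le_one_iff.2 (by linarith)
        have e3 := Real.exp_one_lt_d9
        have e4 := Real.exp_pos 1
        rw [Real.cosh_eq]
        nlinarith
      have hp : 0 ≤ y - (1/30) * y^3 := by
        have : y - (1/30) * y^3 = y * (1 - (1/30) * y^2) := by ring
        rw [this]
        apply mul_nonneg hy0.le
        nlinarith
      have h5 := mul_le_mul_of_nonneg_left hs hp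
      have h6 : 0 ≤ y^2 * (8 - Real.cosh y) := mul_nonneg (sq_nonneg y) (by linarith)
      have h7 : 0 ≤ y^2 * (4 - y^2) := mul_nonneg (sq_nonneg y) (by nlinarith)
      nlinarith [sq_nonneg y]
  have := hm (Set.left_mem_Icc.2 (by norm_num)) ⟨h0, h2⟩ h0
  simp only [Real.sinh_zero] at this
  rw [Real.tanh_eq_sinh_div_cosh, div_le_iff₀ (Real.cosh_pos x)]
  norm_num at this ⊢
  linarith

/-- `h tanh(βh) ≤ βh² - c₀ h⁴` for `β ∈ [1,2]`, `h ∈ [-1,1]`. -/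
theorem statement5 :
    ∃ c₀ : ℝ, 0 < c₀ ∧ ∀ β ∈ Set.Icc (1:ℝ) 2, ∀ h ∈ Set.Icc (-1:ℝ) 1,
      h * Real.tanh (β * h) ≤ β * h^2 - c₀ * h^4 := by
  have key : ∀ β ∈ Set.Icc (1:ℝ) 2, ∀ h : ℝ, 0 ≤ h → h ≤ 1 →
      h * Real.tanh (β * h) ≤ β * h^2 - (1/30) * h^4 := by
    rintro β ⟨hb1, hb2⟩ h h0 h1
    have h3 := mul_le_mul_of_nonneg_left
      (tanh_cubic_bound (β * h) (by positivity) (by nlinarith)) h0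
    have h4 : 1 ≤ β^3 := one_le_pow₀ hb1
    have h5 : 0 ≤ (β^3 - 1) * h^4 := mul_nonneg (by linarith) (by positivity)
    nlinarith
  refine ⟨1/30, by norm_num, ?_⟩
  rintro β hb h ⟨h0, h1⟩
  rcases le_total 0 h with hh | hh
  · exact key β hb h hh h1
  · have := key β hb (-h) (by linarith) (by linarith)
    rw [mul_neg, Real.tanh_neg] at this
    nlinarith

end IsingKac
end
end

section
/- For every p ∈ [1,∞] there exists a constant C > 0 such that for every integer N ≥ 2 (with ε = 1/N) and every f: Λ_ε → ℝ, the extension satisfies ‖Ex f‖_{L^p(𝕋²)} ≤ C (log ε^{−1})² ‖f‖_{L^p(Λ_ε)}. -/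
open scoped BigOperators ENNReal
open MeasureTheory

noncomputable section

namespace IsingKac

open scoped NNReal

/-! ### Auxiliary material for the proof -/

section aux

lemma latRep_bounds (N : ℕ) [NeZero N] (v : ZMod (2*N)) :
    1 - (N:ℤ) ≤ latRep N v ∧ latRep N v ≤ N := by
  have h := ZMod.val_lt v
  unfold latRep
  split_ifs <;> omega

lemma latRep_of_mem (N : ℕ) [NeZero N] (n : ℤ) (h1 : 1 - (N:ℤ) ≤ n) (h2 : n ≤ N) :
    latRep N (n : ZMod (2*N)) = n := by
  have hb := latRep_bounds N (n : ZMod (2*N))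
  have hc := latRep_cast N (n : ZMod (2*N))
  rw [ZMod.intCast_eq_intCast_iff_dvd_sub] at hc
  have := Int.eq_zero_of_abs_lt_dvd hc (by rw [abs_lt]; push_cast; constructor <;> omega)
  omega

/-- Sum over representatives. -/
lemma sum_latRep {M : Type*} [AddCommMonoid M] (N : ℕ) [NeZero N] (F : ℤ → M) :
    ∑ v : ZMod (2*N), F (latRep N v) = ∑ k ∈ Finset.range (2*N), F ((k:ℤ) + 1 - N) := by
  refine Finset.sum_bij' (fun v _ => (latRep N v + N - 1).toNat)
    (fun k _ => (((k:ℤ) + 1 - N : ℤ) : ZMod (2*N))) ?_ ?_ ?_ ?_ ?_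
  · intro v _
    have := latRep_bounds N v
    simp only [Finset.mem_range]; omega
  · intro k _; simp
  · intro v _
    have := latRep_bounds N v
    have h : (((latRep N v + N - 1).toNat : ℤ) + 1 - N) = latRep N v := by omega
    simp only [h]
    exact latRep_cast N v
  · intro k hk
    simp only [Finset.mem_range] at hk
    rw [latRep_of_mem N _ (by omega) (by omega)]
    omega
  · intro v _
    have := latRep_bounds N v
    congr 1; omega

lemma sum_val {M : Type*} [AddCommMonoid M] (N : ℕ) [NeZero N] (F : ℕ → M) :
    ∑ v : ZMod (2*N), F v.val = ∑ k ∈ Finset.range (2*N), F k := by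
  refine Finset.sum_bij' (fun v _ => v.val) (fun k _ => (k : ZMod (2*N))) ?_ ?_ ?_ ?_ ?_
  · intro v _; simpa using ZMod.val_lt v
  · intro k _; simp
  · intro v _; simp
  · intro k hk
    exact ZMod.val_natCast_of_lt (Finset.mem_range.1 hk)
  · intro v _; rfl

/-- One-dimensional kernel. -/
def Kf (N : ℕ) [NeZero N] (t : ℝ) : ℂ :=
  ∑ v : ZMod (2*N), Complex.exp ((Real.pi : ℂ) * Complex.I * ((latRep N v : ℂ) * (t : ℂ)))

/-- Half the absolute value of the kernel. -/
def Kabs (N : ℕ) [NeZero N] (t : ℝ) : ℝ := ‖Kf N t‖ / 2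

lemma Kabs_nonneg (N : ℕ) [NeZero N] (t : ℝ) : 0 ≤ Kabs N t := by unfold Kabs; positivity

lemma Kabs_cont (N : ℕ) [NeZero N] : Continuous (Kabs N) := by
  unfold Kabs Kf; fun_prop

lemma Kabs_periodic (N : ℕ) [NeZero N] : Function.Periodic (Kabs N) 2 := by
  intro t
  unfold Kabs Kf
  congr 2
  refine Finset.sum_congr rfl fun v _ => ?_
  rw [Complex.exp_eq_exp_iff_exists_int]
  refine ⟨latRep N v, ?_⟩
  push_cast; ring

lemma norm_char (a t : ℝ) :
    ‖Complex.exp ((Real.pi : ℂ) * Complex.I * ((a : ℂ) * (t : ℂ)))‖ = 1 := by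
  have := Complex.norm_exp_ofReal_mul_I (Real.pi * (a * t))
  rw [← this]; congr 2; push_cast; ring

lemma Kabs_le (N : ℕ) [NeZero N] (t : ℝ) : Kabs N t ≤ N := by
  unfold Kabs Kf
  have : ‖∑ v : ZMod (2*N), Complex.exp ((Real.pi : ℂ) * Complex.I * ((latRep N v : ℂ) * (t : ℂ)))‖
      ≤ ∑ v : ZMod (2*N), (1:ℝ) := by
    refine (norm_sum_le _ _).trans (Finset.sum_le_sum fun v _ => ?_)
    have := norm_char (latRep N v : ℝ) t
    push_cast at this
    exact this.le
  simp [ZMod.card] at this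
  linarith

lemma Kabs_sin (N : ℕ) [NeZero N] (t : ℝ) :
    Kabs N t * |Real.sin (Real.pi * t / 2)| ≤ 1 / 2 := by
  set q : ℂ := Complex.exp (Complex.I * ((Real.pi * t : ℝ) : ℂ)) with hq
  have hK : Kf N t = Complex.exp ((Real.pi : ℂ) * Complex.I * (((1 - N : ℝ) : ℂ) * (t : ℂ))) *
      ∑ k ∈ Finset.range (2*N), q ^ k := by
    unfold Kf
    rw [sum_latRep N (fun n => Complex.exp ((Real.pi : ℂ) * Complex.I * ((n : ℂ) * (t : ℂ)))),
      Finset.mul_sum]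
    refine Finset.sum_congr rfl fun k _ => ?_
    rw [hq, ← Complex.exp_nat_mul, ← Complex.exp_add]
    congr 1; push_cast; ring
  have hKn : ‖Kf N t‖ = ‖∑ k ∈ Finset.range (2*N), q ^ k‖ := by
    rw [hK, norm_mul, norm_char, one_mul]
  have hqn : ‖q‖ = 1 := by rw [hq]; exact Complex.norm_exp_I_mul_ofReal _
  have h1 : ‖q - 1‖ = 2 * |Real.sin (Real.pi * t / 2)| := by
    rw [hq, Complex.norm_exp_I_mul_ofReal_sub_one, Real.norm_eq_abs, abs_mul]; simp
  have h2 : ‖∑ k ∈ Finset.range (2*N), q ^ k‖ * ‖q - 1‖ ≤ 2 := by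
    rw [← norm_mul, geom_sum_mul]
    refine (norm_sub_le _ _).trans ?_
    rw [norm_pow, hqn]; norm_num
  unfold Kabs
  rw [hKn]
  rw [h1] at h2
  linarith

lemma Kabs_bound (N : ℕ) [NeZero N] (t : ℝ) (h0 : 0 < t) (h2 : t < 2) :
    Kabs N t ≤ 1 / (2 * t) + 1 / (2 * (2 - t)) := by
  have hs := Kabs_sin N t
  have hK := Kabs_nonneg N t
  have hpi := Real.pi_pos
  have h2' : 0 < 2 - t := by linarith
  rcases le_total t 1 with h | h
  · have hsin : t ≤ Real.sin (Real.pi * t / 2) := by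
      have := Real.mul_le_sin (x := Real.pi * t / 2) (by positivity) (by nlinarith)
      refine le_trans (le_of_eq ?_) this
      field_simp
    have : Kabs N t * t ≤ 1 / 2 :=
      (mul_le_mul_of_nonneg_left (hsin.trans (le_abs_self _)) hK).trans hs
    have h3 : Kabs N t ≤ 1 / (2 * t) := by
      rw [le_div_iff₀ (by positivity)]; linarith
    have : 0 ≤ 1 / (2 * (2 - t)) := by positivity
    linarith
  · have hsin : 2 - t ≤ Real.sin (Real.pi * t / 2) := by
      have := Real.mul_le_sin (x := Real.pi * (2 - t) / 2) (by positivity) (by nlinarith)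
      have e : Real.sin (Real.pi * (2 - t) / 2) = Real.sin (Real.pi * t / 2) := by
        rw [← Real.sin_pi_sub]; congr 1; ring
      rw [e] at this
      refine le_trans (le_of_eq ?_) this
      field_simp
    have : Kabs N t * (2 - t) ≤ 1 / 2 :=
      (mul_le_mul_of_nonneg_left (hsin.trans (le_abs_self _)) hK).trans hs
    have h3 : Kabs N t ≤ 1 / (2 * (2 - t)) := by
      rw [le_div_iff₀ (by positivity)]; linarith
    have : 0 ≤ 1 / (2 * t) := by positivity
    linarith

/-- Sum bound for base offset in `[0, 1/N]`. -/
lemma sum_Kabs_base (N : ℕ) [NeZero N] (hN : 2 ≤ N) (y : ℝ) (h0 : 0 ≤ y) (h1 : y ≤ 1 / N) :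
    ∑ k ∈ Finset.range (2*N), Kabs N (y + k / N) ≤ N * (7 * Real.log N) := by
  have hNpos : (0:ℝ) < N := by exact_mod_cast (by omega : 0 < N)
  obtain ⟨M, hM⟩ : ∃ M, 2 * N = M + 1 + 1 := ⟨2*N - 2, by omega⟩
  have hMr : 2 * (N:ℝ) = M + 1 + 1 := by exact_mod_cast hM
  rw [hM, Finset.sum_range_succ, Finset.sum_range_succ']
  have hmid : ∑ k ∈ Finset.range M, Kabs N (y + ((k+1 : ℕ) : ℝ) / N)
      ≤ ∑ k ∈ Finset.range M, (N / 2 * ((k:ℝ) + 1)⁻¹ + N / 2 * (((M - 1 - k : ℕ) : ℝ) + 1)⁻¹) := by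
    refine Finset.sum_le_sum fun k hk => ?_
    have hk' : k < M := Finset.mem_range.1 hk
    have hcast : (((M - 1 - k : ℕ) : ℝ) + 1) = M - k := by
      have : M - 1 - k + 1 + k = M := by omega
      have : ((M - 1 - k : ℕ) : ℝ) + 1 + k = M := by exact_mod_cast this
      linarith
    have hkM : (k:ℝ) < M := by exact_mod_cast hk'
    have hkM1 : 0 < (M:ℝ) - k := by linarith
    rw [hcast]
    have ht1 : ((k:ℝ) + 1) / N ≤ y + ((k+1 : ℕ) : ℝ) / N := by push_cast; linarith
    have ht2 : ((M:ℝ) - k) / N ≤ 2 - (y + ((k+1 : ℕ) : ℝ) / N) := by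
      have e : (2:ℝ) = (M + 1 + 1) / N := by rw [← hMr]; field_simp
      have : ((M:ℝ) - k) / N = 2 - (1 / N + ((k:ℝ)+1) / N) := by
        rw [e]; field_simp; ring
      push_cast; linarith
    have hp1 : 0 < ((k:ℝ) + 1) / N := by positivity
    have hp2 : 0 < ((M:ℝ) - k) / N := by positivity
    refine (Kabs_bound N _ (by linarith) (by linarith)).trans ?_
    have a1 : 1 / (2 * (y + ((k+1 : ℕ) : ℝ) / N)) ≤ 1 / (2 * (((k:ℝ) + 1) / N)) :=
      one_div_le_one_div_of_le (by positivity) (by linarith)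
    have a2 : 1 / (2 * (2 - (y + ((k+1 : ℕ) : ℝ) / N))) ≤ 1 / (2 * (((M:ℝ) - k) / N)) :=
      one_div_le_one_div_of_le (by positivity) (by linarith)
    have b1 : 1 / (2 * (((k:ℝ) + 1) / N)) = N / 2 * ((k:ℝ) + 1)⁻¹ := by field_simp
    have b2 : 1 / (2 * (((M:ℝ) - k) / N)) = N / 2 * ((M:ℝ) - k)⁻¹ := by field_simp
    rw [b1] at a1
    rw [b2] at a2
    linarith
  have hharm : ∑ k ∈ Finset.range M, ((k:ℝ) + 1)⁻¹ ≤ 1 + Real.log M := by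
    have := harmonic_le_one_add_log M
    unfold harmonic at this
    push_cast at this
    exact this
  rw [Finset.sum_add_distrib,
    Finset.sum_range_reflect (fun j => (N:ℝ) / 2 * ((j:ℝ) + 1)⁻¹) M, ← Finset.mul_sum] at hmid
  have hlogM : Real.log M ≤ 2 * Real.log N := by
    have hMpos : (0:ℝ) < M := by exact_mod_cast (by omega : 0 < M)
    rw [show 2 * Real.log N = Real.log (N^2) by rw [Real.log_pow]; norm_num]
    refine Real.log_le_log hMpos ?_
    have : (2:ℝ) ≤ N := by exact_mod_cast hN
    nlinarith
  have hlog2 : 0.69 ≤ Real.log N := by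
    have : Real.log 2 ≤ Real.log N := Real.log_le_log (by norm_num) (by exact_mod_cast hN)
    have := Real.log_two_gt_d9
    linarith
  have c1 := Kabs_le N (y + ((M+1 : ℕ) : ℝ) / N)
  have c2 := Kabs_le N (y + ((0 : ℕ) : ℝ) / N)
  have : (N:ℝ) / 2 * ∑ k ∈ Finset.range M, ((k:ℝ) + 1)⁻¹ ≤ N / 2 * (1 + 2 * Real.log N) :=
    mul_le_mul_of_nonneg_left (hharm.trans (by linarith)) (by positivity)
  nlinarith

lemma sum_Kabs (N : ℕ) [NeZero N] (hN : 2 ≤ N) (x : ℝ) :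
    ∑ v : ZMod (2*N), Kabs N (x - (latRep N v : ℝ) / N) ≤ N * (7 * Real.log N) := by
  have hNpos : (0:ℝ) < N := by exact_mod_cast (by omega : 0 < N)
  have hper : ∀ n : ℤ, Kabs N (x - (latRep N (n : ZMod (2*N)) : ℝ) / N) = Kabs N (x - n / N) := by
    intro n
    have hc := latRep_cast N (n : ZMod (2*N))
    rw [ZMod.intCast_eq_intCast_iff_dvd_sub] at hc
    obtain ⟨j, hj⟩ := hc
    have hj' : (n:ℝ) = latRep N (n : ZMod (2*N)) + 2 * N * j := by
      have : n = latRep N (n : ZMod (2*N)) + 2 * N * j := by push_cast at hj; linarith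
      exact_mod_cast this
    have e : x - (latRep N (n : ZMod (2*N)) : ℝ) / N = (x - n / N) + j * 2 := by
      rw [hj']; field_simp; ring
    rw [e]
    exact (Kabs_periodic N).int_mul j _
  set m : ℤ := ⌊(N:ℝ) * x⌋ with hm
  have e1 : ∑ v : ZMod (2*N), Kabs N (x - (latRep N v : ℝ) / N)
      = ∑ v : ZMod (2*N), Kabs N (x - (latRep N ((m : ZMod (2*N)) - v) : ℝ) / N) :=
    ((Equiv.subLeft (m : ZMod (2*N))).sum_comp
      (fun v => Kabs N (x - (latRep N v : ℝ) / N))).symm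
  have e2 : ∀ v : ZMod (2*N), Kabs N (x - (latRep N ((m : ZMod (2*N)) - v) : ℝ) / N)
      = Kabs N ((x - m / N) + (v.val : ℝ) / N) := by
    intro v
    have : (m : ZMod (2*N)) - v = ((m - (v.val : ℤ) : ℤ) : ZMod (2*N)) := by simp
    rw [this, hper]
    congr 1; push_cast; ring
  rw [e1, Finset.sum_congr rfl (fun v _ => e2 v),
    sum_val N (fun k => Kabs N ((x - m / N) + (k : ℝ) / N))]
  have f1 := Int.floor_le ((N:ℝ) * x)
  have f2 := (Int.lt_floor_add_one ((N:ℝ) * x)).le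
  rw [← hm] at f1 f2
  apply sum_Kabs_base N hN
  · rw [sub_nonneg, div_le_iff₀ hNpos]; linarith
  · rw [sub_le_iff_le_add, ← add_div, le_div_iff₀ hNpos]; linarith

lemma integral_Kabs (N : ℕ) [NeZero N] (hN : 2 ≤ N) (a : ℝ) :
    ∫ x in (-1:ℝ)..1, Kabs N (x - a) ≤ 7 * Real.log N := by
  have hNpos : (0:ℝ) < N := by exact_mod_cast (by omega : 0 < N)
  have hc := Kabs_cont N
  rw [intervalIntegral.integral_comp_sub_right (fun x => Kabs N x) a]
  have h1 := (Kabs_periodic N).intervalIntegral_add_eq (-1 - a) 0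
  rw [show (-1 - a + 2 : ℝ) = 1 - a by ring, zero_add] at h1
  rw [h1]
  have h2 := intervalIntegral.sum_integral_adjacent_intervals (f := Kabs N) (μ := volume)
    (a := fun k : ℕ => (k:ℝ) / N) (n := 2 * N) (fun k _ => hc.intervalIntegrable _ _)
  simp only [Nat.cast_zero, zero_div] at h2
  rw [show (((2 * N : ℕ) : ℝ) / N) = 2 by push_cast; field_simp] at h2
  rw [← h2]
  have h3 : ∀ k : ℕ, ∫ x in ((k:ℝ)/N)..(((k+1 : ℕ):ℝ)/N), Kabs N x
      = ∫ y in (0:ℝ)..(1/N), Kabs N (y + k / N) := by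
    intro k
    rw [intervalIntegral.integral_comp_add_right (fun x => Kabs N x)]
    congr 1
    · ring
    · push_cast; ring
  rw [Finset.sum_congr rfl (fun k _ => h3 k), ← intervalIntegral.integral_finsetSum
    (fun k _ => Continuous.intervalIntegrable (by fun_prop) _ _)]
  have h4 : ∫ y in (0:ℝ)..(1/N), ∑ k ∈ Finset.range (2*N), Kabs N (y + k / N)
      ≤ ∫ y in (0:ℝ)..(1/N), (N * (7 * Real.log N)) := by
    apply intervalIntegral.integral_mono_on (by positivity)
    · exact Continuous.intervalIntegrable (by fun_prop) _ _
    · exact intervalIntegrable_const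
    · intro y hy
      exact sum_Kabs_base N hN y hy.1 hy.2
  refine h4.trans (le_of_eq ?_)
  rw [intervalIntegral.integral_const]
  simp only [smul_eq_mul]
  field_simp
  ring

lemma lintegral_Kabs (N : ℕ) [NeZero N] (hN : 2 ≤ N) (a : ℝ) :
    ∫⁻ x in Set.Icc (-1:ℝ) 1, ENNReal.ofReal (Kabs N (x - a)) ≤ ENNReal.ofReal (7 * Real.log N) := by
  have hc := Kabs_cont N
  rw [← ofReal_integral_eq_lintegral_ofReal]
  · apply ENNReal.ofReal_le_ofReal
    rw [integral_Icc_eq_integral_Ioc, ← intervalIntegral.integral_of_le (by norm_num)]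
    exact integral_Kabs N hN a
  · exact (Continuous.continuousOn (by fun_prop)).integrableOn_Icc
  · exact Filter.Eventually.of_forall fun x => Kabs_nonneg N _

/-- The two dimensional kernel. -/
def ker2 (N : ℕ) [NeZero N] (z : Lat N) (x : ℝ × ℝ) : ℝ :=
  ((N:ℝ)^2)⁻¹ * (Kabs N (x.1 - (latRep N z.1 : ℝ) / N) * Kabs N (x.2 - (latRep N z.2 : ℝ) / N))

lemma ker2_nonneg (N : ℕ) [NeZero N] (z : Lat N) (x : ℝ × ℝ) : 0 ≤ ker2 N z x := by
  have := Kabs_nonneg N (x.1 - (latRep N z.1 : ℝ) / N)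
  have := Kabs_nonneg N (x.2 - (latRep N z.2 : ℝ) / N)
  unfold ker2; positivity

lemma sum_ker2 (N : ℕ) [NeZero N] (hN : 2 ≤ N) (x : ℝ × ℝ) :
    ∑ z : Lat N, ker2 N z x ≤ (7 * Real.log N)^2 := by
  have hNpos : (0:ℝ) < N := by exact_mod_cast (by omega : 0 < N)
  unfold ker2
  rw [← Finset.mul_sum, Fintype.sum_prod_type]
  simp only []
  rw [← Fintype.sum_mul_sum]
  have h1 := sum_Kabs N hN x.1
  have h2 := sum_Kabs N hN x.2
  have := mul_le_mul h1 h2 (Finset.sum_nonneg fun _ _ => Kabs_nonneg _ _)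
    (by have := Real.log_natCast_nonneg N; positivity)
  rw [inv_mul_le_iff₀ (by positivity)]
  refine this.trans (le_of_eq (by ring))

lemma lintegral_ker2 (N : ℕ) [NeZero N] (hN : 2 ≤ N) (z : Lat N) :
    ∫⁻ x in box, ENNReal.ofReal (ker2 N z x) ≤
      ENNReal.ofReal (((N:ℝ)^2)⁻¹) * ENNReal.ofReal ((7 * Real.log N)^2) := by
  have hc := Kabs_cont N
  have hlog := Real.log_natCast_nonneg N
  unfold ker2 box
  have e : ∀ x : ℝ × ℝ, ENNReal.ofReal (((N:ℝ)^2)⁻¹ *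
      (Kabs N (x.1 - (latRep N z.1 : ℝ) / N) * Kabs N (x.2 - (latRep N z.2 : ℝ) / N)))
      = ENNReal.ofReal (((N:ℝ)^2)⁻¹) * (ENNReal.ofReal (Kabs N (x.1 - (latRep N z.1 : ℝ) / N)) *
        ENNReal.ofReal (Kabs N (x.2 - (latRep N z.2 : ℝ) / N))) := by
    intro x
    rw [ENNReal.ofReal_mul (by positivity), ENNReal.ofReal_mul (Kabs_nonneg _ _)]
  simp_rw [e]
  rw [lintegral_const_mul' _ _ ENNReal.ofReal_ne_top, Measure.volume_eq_prod,
    ← Measure.prod_restrict,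
    lintegral_prod_mul (f := fun s => ENNReal.ofReal (Kabs N (s - (latRep N z.1 : ℝ) / N)))
      (g := fun s => ENNReal.ofReal (Kabs N (s - (latRep N z.2 : ℝ) / N)))]
  · gcongr
    rw [pow_two, ENNReal.ofReal_mul (by positivity)]
    exact mul_le_mul' (lintegral_Kabs N hN _) (lintegral_Kabs N hN _)
  · exact (ENNReal.measurable_ofReal.comp (Continuous.measurable (by fun_prop))).aemeasurable
  · exact (ENNReal.measurable_ofReal.comp (Continuous.measurable (by fun_prop))).aemeasurable

lemma Ex_eq (N : ℕ) [NeZero N] (f : Lat N → ℂ) (x : ℝ × ℝ) :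
    Ex N f x = ∑ z : Lat N, ((N:ℂ)^2)⁻¹ * f z *
      ((Kf N (x.1 - (latRep N z.1 : ℝ) / N) / 2) * (Kf N (x.2 - (latRep N z.2 : ℝ) / N) / 2)) := by
  unfold Ex dFT
  simp_rw [Finset.sum_mul]
  rw [Finset.sum_comm, Finset.mul_sum]
  refine Finset.sum_congr rfl fun z _ => ?_
  have : ∀ a b c : ℂ, a * (b / 2 * (c / 2)) = (1/4) * (a * (b * c)) := by intros; ring
  rw [this]
  unfold Kf
  rw [Fintype.sum_mul_sum, Finset.mul_sum, Fintype.sum_prod_type]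
  simp_rw [Finset.mul_sum]
  refine Finset.sum_congr rfl fun w1 _ => Finset.sum_congr rfl fun w2 _ => ?_
  unfold eW latRep2 latPt
  rw [← Complex.exp_conj, mul_assoc, ← Complex.exp_add, ← Complex.exp_add]
  congr 3
  simp only [map_mul, map_add, Complex.conj_I, Complex.conj_ofReal, map_intCast]
  push_cast; ring

lemma norm_Ex_le (N : ℕ) [NeZero N] (f : Lat N → ℝ) (x : ℝ × ℝ) :
    ‖Ex N (fun z => ((f z : ℝ) : ℂ)) x‖ ≤ ∑ z : Lat N, ker2 N z x * ‖f z‖ := by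
  rw [Ex_eq]
  refine (norm_sum_le _ _).trans (le_of_eq (Finset.sum_congr rfl fun z _ => ?_))
  unfold ker2 Kabs
  simp only [norm_mul, norm_inv, norm_pow, norm_div, Complex.norm_natCast, Complex.norm_real,
    Complex.norm_ofNat]
  ring

/-- Schur test. -/
lemma schur_test {X ι : Type*} [MeasurableSpace X] [Fintype ι] (μ : Measure X)
    (k : ι → X → ℝ≥0∞) (hk : ∀ i, Measurable (k i)) (g : ι → ℝ≥0∞) (B w : ℝ≥0∞) (p : ℝ)
    (hp : 1 ≤ p) (h1 : ∀ x, ∑ i, k i x ≤ B) (h2 : ∀ i, ∫⁻ x, k i x ∂μ ≤ w * B) :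
    (∫⁻ x, (∑ i, k i x * g i) ^ p ∂μ) ^ (1 / p) ≤ B * (∑ i, w * g i ^ p) ^ (1 / p) := by
  have hp0 : 0 < p := by linarith
  have step1 : ∀ x, (∑ i, k i x * g i) ^ p ≤ B ^ (p - 1) * ∑ i, k i x * g i ^ p := by
    intro x
    have := ENNReal.inner_le_weight_mul_Lp_of_nonneg Finset.univ hp (fun i => k i x) g
    refine (ENNReal.rpow_le_rpow this hp0.le).trans ?_
    rw [ENNReal.mul_rpow_of_nonneg _ _ hp0.le, ← ENNReal.rpow_mul, ← ENNReal.rpow_mul,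
      inv_mul_cancel₀ hp0.ne', ENNReal.rpow_one,
      show (1 - p⁻¹) * p = p - 1 by field_simp]
    have : 0 ≤ p - 1 := by linarith
    gcongr
    exact h1 x
  have step2 : ∫⁻ x, (∑ i, k i x * g i) ^ p ∂μ ≤ B ^ p * ∑ i, w * g i ^ p := by
    calc ∫⁻ x, (∑ i, k i x * g i) ^ p ∂μ
        ≤ ∫⁻ x, B ^ (p - 1) * ∑ i, k i x * g i ^ p ∂μ := lintegral_mono step1
      _ = B ^ (p - 1) * ∑ i, (∫⁻ x, k i x ∂μ) * g i ^ p := by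
          rw [lintegral_const_mul _ (Finset.measurable_sum _ fun i _ => (hk i).mul_const _),
            lintegral_finsetSum _ fun i _ => (hk i).mul_const _]
          congr 1
          exact Finset.sum_congr rfl fun i _ => lintegral_mul_const _ (hk i)
      _ ≤ B ^ (p - 1) * ∑ i, (w * B) * g i ^ p := by
          gcongr with i
          exact h2 i
      _ = B ^ p * ∑ i, w * g i ^ p := by
          have e : B ^ p = B ^ (p - 1) * B := by
            conv_lhs => rw [show p = (p - 1) + 1 by ring]
            rw [ENNReal.rpow_add_of_nonneg _ _ (by linarith) (by norm_num), ENNReal.rpow_one]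
          rw [e, mul_assoc, Finset.mul_sum (a := B)]
          congr 1
          exact Finset.sum_congr rfl fun i _ => by ring
  refine (ENNReal.rpow_le_rpow step2 (by positivity)).trans (le_of_eq ?_)
  rw [ENNReal.mul_rpow_of_nonneg _ _ (by positivity), ← ENNReal.rpow_mul,
    mul_one_div_cancel hp0.ne', ENNReal.rpow_one]

end aux

/-- `‖Ex f‖_{L^p(𝕋²)} ≤ C log²(ε^{-1}) ‖f‖_{L^p(Λ_ε)}`. -/
theorem statement6 (p : ℝ≥0∞) (hp : 1 ≤ p) :
    ∃ C : ℝ, 0 < C ∧ ∀ (N : ℕ) [NeZero N], 2 ≤ N → ∀ f : Lat N → ℝ,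
      cLp p (Ex N (fun z => ((f z : ℝ) : ℂ))) ≤
        ENNReal.ofReal (C * (Real.log (N : ℝ))^2 * dLp N p f) := by
  refine ⟨49, by norm_num, ?_⟩
  intro N _ hN f
  have hB : (49 : ℝ) * (Real.log (N:ℝ))^2 = (7 * Real.log N)^2 := by ring
  rw [hB]
  unfold cLp dLp
  by_cases hptop : p = ∞
  · subst hptop
    rw [if_pos rfl, eLpNorm_exponent_top]
    refine eLpNormEssSup_le_of_ae_bound (Filter.Eventually.of_forall fun x => ?_)
    refine (norm_Ex_le N f x).trans ?_
    have hS : ∀ z, ‖f z‖ ≤ ⨆ z : Lat N, ‖f z‖ := fun z => le_ciSup (f := fun z => ‖f z‖) (Set.finite_range _).bddAbove z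
    calc ∑ z : Lat N, ker2 N z x * ‖f z‖ ≤ ∑ z : Lat N, ker2 N z x * ⨆ z : Lat N, ‖f z‖ :=
          Finset.sum_le_sum fun z _ => mul_le_mul_of_nonneg_left (hS z) (ker2_nonneg N z x)
      _ ≤ _ := by
          rw [← Finset.sum_mul]
          exact mul_le_mul_of_nonneg_right (sum_ker2 N hN x)
            ((norm_nonneg _).trans (hS 0))
  · rw [if_neg hptop]
    have hp0 : p ≠ 0 := by rintro rfl; simp at hp
    have hp1 : 1 ≤ p.toReal := by
      have := ENNReal.toReal_mono hptop hp
      simpa using this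
    rw [eLpNorm_eq_lintegral_rpow_enorm_toReal hp0 hptop, ENNReal.ofReal_mul (by positivity)]
    have hc := Kabs_cont N
    have key := schur_test (volume.restrict box) (fun (z : Lat N) x => ENNReal.ofReal (ker2 N z x))
      (fun z => ENNReal.measurable_ofReal.comp
        (Continuous.measurable (by unfold ker2; fun_prop)))
      (fun z => ENNReal.ofReal ‖f z‖) (ENNReal.ofReal ((7 * Real.log N)^2))
      (ENNReal.ofReal (((N:ℝ)^2)⁻¹)) p.toReal hp1
      (fun x => by
        rw [← ENNReal.ofReal_sum_of_nonneg fun z _ => ker2_nonneg N z x]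
        exact ENNReal.ofReal_le_ofReal (sum_ker2 N hN x))
      (fun z => lintegral_ker2 N hN z)
    refine le_trans ?_ (key.trans (le_of_eq ?_))
    · gcongr with x
      rw [← ofReal_norm]
      refine (ENNReal.ofReal_le_ofReal (norm_Ex_le N f x)).trans (le_of_eq ?_)
      rw [ENNReal.ofReal_sum_of_nonneg fun z _ => mul_nonneg (ker2_nonneg N z x) (norm_nonneg _)]
      exact Finset.sum_congr rfl fun z _ => ENNReal.ofReal_mul (ker2_nonneg N z x)
    · congr 1
      rw [← ENNReal.ofReal_rpow_of_nonneg (Finset.sum_nonneg fun z _ => by positivity)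
        (by positivity), ENNReal.ofReal_sum_of_nonneg fun z _ => by positivity]
      congr 1
      refine Finset.sum_congr rfl fun z _ => ?_
      rw [ENNReal.ofReal_mul (by positivity),
        ENNReal.ofReal_rpow_of_nonneg (norm_nonneg _) (by linarith)]

end IsingKac
end
end
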